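/- Consider lossless transmission at source-channel rate b = 1 of arbitrarily correlated sources (S1, S2) over a DM compound multiple access channel p(y1,y2|x1,x2) with side information W1 at receiver 1 and W2 at receiver 2, where both receivers must reconstruct both sources. Rate 1 is achievable if there exists a joint distribution of the form p(q,s1,s2,w1,w2,x1,x2,y1,y2) = p(q)·p(s1,s2,w1,w2)·p(x1|q,s1)·p(x2|q,s2)·p(y1,y2|x1,x2) such that for each k = 1, 2: H(S1|S2,Wk) < I(X1;Yk|X2,S2,Wk,Q), H(S2|S1,Wk) < I(X2;Yk|X1,S1,Wk,Q), H(S1,S2|U,Wk) < I(X1,X2;Yk|U,Wk,Q), and H(S1,S2|Wk) < I(X1,X2;Yk|Wk), where U is the Gács–Körner common part of S1 and S2. -/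

import Mathlib

open scoped BigOperators Classical

noncomputable section

/-- Probability that the random variable `X` equals `a`, under the pmf `μ`
on the finite sample space `Ω`. -/
def prD {Ω α : Type} [Fintype Ω] (μ : Ω → ℝ) (X : Ω → α) (a : α) : ℝ :=
  ∑ ω, if X ω = a then μ ω else 0

/-- Shannon entropy (in nats) of the random variable `X` under the pmf `μ`. -/
def ent {Ω α : Type} [Fintype Ω] [Fintype α] (μ : Ω → ℝ) (X : Ω → α) : ℝ :=
  -∑ a, prD μ X a * Real.log (prD μ X a)

/-- Conditional entropy `H(X | Y)` under the pmf `μ`. -/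
def condEnt {Ω α β : Type} [Fintype Ω] [Fintype α] [Fintype β]
    (μ : Ω → ℝ) (X : Ω → α) (Y : Ω → β) : ℝ :=
  ent μ (fun ω => (X ω, Y ω)) - ent μ Y

/-- Mutual information `I(X ; Y)` under the pmf `μ`. -/
def mutInf {Ω α β : Type} [Fintype Ω] [Fintype α] [Fintype β]
    (μ : Ω → ℝ) (X : Ω → α) (Y : Ω → β) : ℝ :=
  ent μ X + ent μ Y - ent μ (fun ω => (X ω, Y ω))

/-- Conditional mutual information `I(X ; Y | Z)` under the pmf `μ`. -/
def condMutInf {Ω α β γ : Type} [Fintype Ω] [Fintype α] [Fintype β] [Fintype γ]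
    (μ : Ω → ℝ) (X : Ω → α) (Y : Ω → β) (Z : Ω → γ) : ℝ :=
  condEnt μ X Z - condEnt μ X (fun ω => (Y ω, Z ω))

/-- `p` is a probability mass function on the finite type `α`. -/
def IsPmf {α : Type} [Fintype α] (p : α → ℝ) : Prop :=
  (∀ a, 0 ≤ p a) ∧ ∑ a, p a = 1


/-- `(u1, u2)` (with values in `Fin nu`) is a Gács–Körner common part of the sources `S1`
and `S2` (obtained from the sample space `R` via the projections `projS1`, `projS2`)
under the pmf `pS`: it is a common deterministic function of both sources (a.s.), and it
has maximal entropy among all such common functions. -/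
def IsGKCommonPart {S1 S2 R : Type} [Fintype S1] [Fintype S2] [Fintype R]
    (pS : R → ℝ) (projS1 : R → S1) (projS2 : R → S2) {nu : ℕ}
    (u1 : S1 → Fin nu) (u2 : S2 → Fin nu) : Prop :=
  (∀ r, 0 < pS r → u1 (projS1 r) = u2 (projS2 r)) ∧
  ∀ (k : ℕ) (v1 : S1 → Fin k) (v2 : S2 → Fin k),
    (∀ r, 0 < pS r → v1 (projS1 r) = v2 (projS2 r)) →
    ent pS (fun r => v1 (projS1 r)) ≤ ent pS (fun r => u1 (projS1 r))


/-- Average probability of error of the joint source-channel code `(f1, f2, g1, g2)` for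
transmitting the i.i.d. source blocks `(S1^m, S2^m)` over `n` uses of the DM compound MAC
`chan` to two receivers having side information `W1^m` and `W2^m`, each of which must
reconstruct both source blocks. -/
def cmacErr {S1 S2 W1 W2 X1 X2 Y1 Y2 : Type} [Fintype S1] [Fintype S2] [Fintype W1]
    [Fintype W2] [Fintype X1] [Fintype X2] [Fintype Y1] [Fintype Y2]
    (pS : S1 × S2 × W1 × W2 → ℝ) (chan : X1 → X2 → Y1 × Y2 → ℝ) (m n : ℕ)
    (f1 : (Fin m → S1) → Fin n → X1) (f2 : (Fin m → S2) → Fin n → X2)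
    (g1 : (Fin n → Y1) → (Fin m → W1) → (Fin m → S1) × (Fin m → S2))
    (g2 : (Fin n → Y2) → (Fin m → W2) → (Fin m → S1) × (Fin m → S2)) : ℝ :=
  ∑ sb : Fin m → S1 × S2 × W1 × W2, ∑ yb : Fin n → Y1 × Y2,
    ((∏ i, pS (sb i)) *
      ∏ j, chan (f1 (fun i => (sb i).1) j) (f2 (fun i => (sb i).2.1) j) (yb j)) *
    (if g1 (fun j => (yb j).1) (fun i => (sb i).2.2.1)
          = (fun i => (sb i).1, fun i => (sb i).2.1)
        ∧ g2 (fun j => (yb j).2) (fun i => (sb i).2.2.2)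
          = (fun i => (sb i).1, fun i => (sb i).2.1)
      then 0 else 1)

/-- Source-channel rate `b` is achievable for the compound MAC with receiver side
information, where both receivers must losslessly reconstruct both sources. -/
def cmacAchievable {S1 S2 W1 W2 X1 X2 Y1 Y2 : Type} [Fintype S1] [Fintype S2]
    [Fintype W1] [Fintype W2] [Fintype X1] [Fintype X2] [Fintype Y1] [Fintype Y2]
    (pS : S1 × S2 × W1 × W2 → ℝ) (chan : X1 → X2 → Y1 × Y2 → ℝ) (b : ℝ) : Prop :=
  ∀ ε : ℝ, 0 < ε → ∃ m n : ℕ, 0 < m ∧ 0 < n ∧ (n : ℝ) = b * m ∧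
    ∃ (f1 : (Fin m → S1) → Fin n → X1) (f2 : (Fin m → S2) → Fin n → X2)
      (g1 : (Fin n → Y1) → (Fin m → W1) → (Fin m → S1) × (Fin m → S2))
      (g2 : (Fin n → Y2) → (Fin m → W2) → (Fin m → S1) × (Fin m → S2)),
      cmacErr pS chan m n f1 f2 g1 g2 < ε

/-- The single-letter channel input/output distribution
`p(q,x1,x2,y1,y2) = p(q) p(x1|q) p(x2|q) p(y1,y2|x1,x2)`. -/
def cmacChanMeasure {X1 X2 Y1 Y2 : Type} (nq : ℕ) (pq : Fin nq → ℝ)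
    (px1 : Fin nq → X1 → ℝ) (px2 : Fin nq → X2 → ℝ)
    (chan : X1 → X2 → Y1 × Y2 → ℝ) : Fin nq × X1 × X2 × (Y1 × Y2) → ℝ :=
  fun z => pq z.1 * px1 z.1 z.2.1 * px2 z.1 z.2.2.1 * chan z.2.1 z.2.2.1 z.2.2.2

/-- The joint single-letter distribution
`p(q,s1,s2,w1,w2,x1,x2,y1,y2) = p(q) p(s1,s2,w1,w2) p(x1|q,s1) p(x2|q,s2) p(y1,y2|x1,x2)`. -/
def cmacJointMeasure {S1 S2 W1 W2 X1 X2 Y1 Y2 : Type} (nq : ℕ)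
    (pq : Fin nq → ℝ) (pS : S1 × S2 × W1 × W2 → ℝ)
    (px1 : Fin nq → S1 → X1 → ℝ) (px2 : Fin nq → S2 → X2 → ℝ)
    (chan : X1 → X2 → Y1 × Y2 → ℝ) :
    Fin nq × (S1 × S2 × W1 × W2) × X1 × X2 × (Y1 × Y2) → ℝ :=
  fun z => pq z.1 * pS z.2.1 * px1 z.1 z.2.1.1 z.2.2.1 * px2 z.1 z.2.1.2.1 z.2.2.2.1 *
    chan z.2.2.1 z.2.2.2.1 z.2.2.2.2

section FiniteProbability

variable {ι Ω α β γ : Type} [Fintype ι] [DecidableEq ι] [Fintype Ω] [Fintype β]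

theorem sum_pi_prod (p : ι → β → ℝ) : ∑ f : ι → β, ∏ i, p i (f i) = ∏ i, ∑ b, p i b := by
  rw [Finset.prod_univ_sum, Fintype.piFinset_univ]

/-- Under a product pmf two distinct coordinates are independent, product form. -/
theorem sum_pi_mul_apply_mul_apply (p : ι → β → ℝ) (hp : ∀ i, ∑ b, p i b = 1) {a a' : ι}
    (haa' : a ≠ a') (G H : β → ℝ) :
    ∑ f : ι → β, (∏ i, p i (f i)) * (G (f a) * H (f a')) =
      (∑ b, p a b * G b) * ∑ b, p a' b * H b := by
  have h1 : ∀ f : ι → β, (∏ i, p i (f i)) * (G (f a) * H (f a')) =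
      ∏ i, p i (f i) * ((if i = a then G (f i) else 1) * (if i = a' then H (f i) else 1)) := by
    intro f
    rw [Finset.prod_mul_distrib, Finset.prod_mul_distrib]
    simp
  simp_rw [h1]
  rw [sum_pi_prod (fun i b => p i b * ((if i = a then G b else 1) * (if i = a' then H b else 1)))]
  have h2 : ∀ i, ∑ b, p i b * ((if i = a then G b else 1) * (if i = a' then H b else 1)) =
      (if i = a then ∑ b, p a b * G b else 1) * (if i = a' then ∑ b, p a' b * H b else 1) := by
    intro i
    by_cases h : i = a
    · subst h
      simp [haa']
    · by_cases h' : i = a'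
      · subst h'
        simp [h]
      · simp [h, h', hp]
  simp_rw [h2, Finset.prod_mul_distrib]
  simp

theorem sum_pi_mul_apply (p : ι → β → ℝ) (hp : ∀ i, ∑ b, p i b = 1) (a : ι) (G : β → ℝ) :
    ∑ f : ι → β, (∏ i, p i (f i)) * G (f a) = ∑ b, p a b * G b := by
  have h1 : ∀ f : ι → β, (∏ i, p i (f i)) * G (f a) =
      ∏ i, p i (f i) * (if i = a then G (f i) else 1) := by
    intro f
    rw [Finset.prod_mul_distrib]
    simp
  simp_rw [h1]
  rw [sum_pi_prod (fun i b => p i b * (if i = a then G b else 1))]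
  have h2 : ∀ i, ∑ b, p i b * (if i = a then G b else 1) =
      (if i = a then ∑ b, p a b * G b else 1) := by
    intro i
    by_cases h : i = a
    · subst h
      simp
    · simp [h, hp]
  simp_rw [h2]
  simp

/-- Under a product pmf two distinct coordinates are independent. -/
theorem sum_pi_mul_apply₂ (p : ι → β → ℝ) (hp : ∀ i, ∑ b, p i b = 1) {a a' : ι}
    (haa' : a ≠ a') (F : β → β → ℝ) :
    ∑ f : ι → β, (∏ i, p i (f i)) * F (f a) (f a') =
      ∑ b, p a b * ∑ b', p a' b' * F b b' := by
  have h1 : ∀ f : ι → β, (∏ i, p i (f i)) * F (f a) (f a') =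
      ∑ c, (∏ i, p i (f i)) * ((if f a = c then 1 else 0) * F c (f a')) := by
    intro f
    simp
  simp_rw [h1]
  rw [Finset.sum_comm]
  simp_rw [fun c => sum_pi_mul_apply_mul_apply p hp haa' (fun b => if b = c then 1 else 0) (F c)]
  simp

theorem prD_nonneg {μ : Ω → ℝ} (hμ : ∀ ω, 0 ≤ μ ω) (X : Ω → α) (a : α) : 0 ≤ prD μ X a :=
  Finset.sum_nonneg fun ω _ => by split_ifs <;> simp [hμ]

theorem le_prD {μ : Ω → ℝ} (hμ : ∀ ω, 0 ≤ μ ω) (X : Ω → α) (ω : Ω) : μ ω ≤ prD μ X (X ω) := by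
  have := Finset.single_le_sum (f := fun ω' => if X ω' = X ω then μ ω' else 0)
    (fun ω' _ => by split_ifs <;> simp [hμ]) (Finset.mem_univ ω)
  simpa [prD] using this

theorem sum_prD_mul [Fintype α] (μ : Ω → ℝ) (X : Ω → α) (F : α → ℝ) :
    ∑ a, prD μ X a * F a = ∑ ω, μ ω * F (X ω) := by
  simp_rw [prD, Finset.sum_mul]
  rw [Finset.sum_comm]
  simp [ite_mul]

theorem ent_eq_neg_sum [Fintype α] (μ : Ω → ℝ) (X : Ω → α) :
    ent μ X = -∑ ω, μ ω * Real.log (prD μ X (X ω)) := by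
  rw [ent, sum_prD_mul μ X (fun a => Real.log (prD μ X a))]

theorem prD_comp (μ : Ω → ℝ) (π : Ω → β) (X : β → α) (a : α) :
    prD μ (fun ω => X (π ω)) a = prD (prD μ π) X a := by
  have := sum_prD_mul μ π (fun b => if X b = a then 1 else 0)
  simpa [prD] using this.symm

theorem ent_comp [Fintype α] (μ : Ω → ℝ) (π : Ω → β) (X : β → α) :
    ent μ (fun ω => X (π ω)) = ent (prD μ π) X := by
  simp only [ent, prD_comp]

theorem condEnt_comp [Fintype α] [Fintype γ] (μ : Ω → ℝ) (π : Ω → β) (X : β → α) (Y : β → γ) :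
    condEnt μ (fun ω => X (π ω)) (fun ω => Y (π ω)) = condEnt (prD μ π) X Y := by
  simp only [condEnt, ← ent_comp]

theorem condMutInf_comp {δ : Type} [Fintype α] [Fintype γ] [Fintype δ] (μ : Ω → ℝ)
    (π : Ω → β) (X : β → α) (Y : β → γ) (Z : β → δ) :
    condMutInf μ (fun ω => X (π ω)) (fun ω => Y (π ω)) (fun ω => Z (π ω)) =
      condMutInf (prD μ π) X Y Z := by
  simp only [condMutInf, ← condEnt_comp]

/-- A Chernoff-type bound: a positive mean yields an exponential moment below one. -/
theorem exists_sum_mul_exp_lt_one {μ : Ω → ℝ} (hμ : ∑ ω, μ ω = 1) (g : Ω → ℝ)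
    (hg : 0 < ∑ ω, μ ω * g ω) : ∃ t : ℝ, 0 < t ∧ ∑ ω, μ ω * Real.exp (-(t * g ω)) < 1 := by
  have hd : HasDerivAt (fun t : ℝ => ∑ ω, μ ω * Real.exp (-(t * g ω)))
      (∑ ω, μ ω * (Real.exp (-(0 * g ω)) * (-(1 * g ω)))) 0 := by
    apply HasDerivAt.fun_sum
    intro ω _
    exact (((hasDerivAt_id (0 : ℝ)).mul_const (g ω)).neg.exp).const_mul (μ ω)
  have hneg : ∑ ω, μ ω * (Real.exp (-(0 * g ω)) * (-(1 * g ω))) < 0 := by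
    simpa using hg
  have hsl := (hasDerivAt_iff_tendsto_slope.1 hd).eventually (gt_mem_nhds hneg)
  have hsl' := hsl.filter_mono (nhdsWithin_mono 0 (s := Set.Ioi 0)
    (fun x (hx : 0 < x) => ne_of_gt hx))
  obtain ⟨t, ht, ht0⟩ := (hsl'.and self_mem_nhdsWithin).exists
  have ht0 : (0 : ℝ) < t := ht0
  refine ⟨t, ht0, ?_⟩
  rw [slope_def_field, div_neg_iff] at ht
  have h0 : ∑ ω, μ ω * Real.exp (-((0 : ℝ) * g ω)) = 1 := by simpa using hμ
  rcases ht with ht | ht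
  · linarith [ht.2]
  · linarith [ht.1]

/-- Exponential decay of the probability that a likelihood-ratio product stays below its mean
rate. -/
theorem exists_likelihood_ratio_bound {μ : Ω → ℝ} (hμ0 : ∀ ω, 0 ≤ μ ω) (hμ : ∑ ω, μ ω = 1)
    (a b : Ω → ℝ) (hab : ∀ ω, 0 < μ ω → 0 < a ω ∧ 0 < b ω) (δ : ℝ)
    (hδ : δ < ∑ ω, μ ω * (Real.log (a ω) - Real.log (b ω))) :
    ∃ ρ : ℝ, 0 ≤ ρ ∧ ρ < 1 ∧ ∀ n : ℕ, ∑ z : Fin n → Ω,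
      (∏ i, μ (z i)) * (if Real.exp δ ^ n * ∏ i, b (z i) ≤ ∏ i, a (z i) then 0 else 1) ≤ ρ ^ n := by
  obtain ⟨t, ht, hlt⟩ := exists_sum_mul_exp_lt_one hμ
    (fun ω => Real.log (a ω) - Real.log (b ω) - δ) (by
      simp_rw [mul_sub _ _ δ, Finset.sum_sub_distrib, ← Finset.sum_mul, hμ]
      linarith)
  refine ⟨_, Finset.sum_nonneg fun ω _ => mul_nonneg (hμ0 ω)
    (Real.exp_pos (-(t * (Real.log (a ω) - Real.log (b ω) - δ)))).le, hlt, fun n => ?_⟩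
  have hpow := sum_pi_prod (ι := Fin n) (fun _ ω => μ ω *
    Real.exp (-(t * (Real.log (a ω) - Real.log (b ω) - δ))))
  rw [Finset.prod_const, Finset.card_univ, Fintype.card_fin] at hpow
  rw [← hpow]
  refine Finset.sum_le_sum fun z _ => ?_
  rw [Finset.prod_mul_distrib]
  by_cases hz : ∀ i, 0 < μ (z i)
  · refine mul_le_mul_of_nonneg_left ?_ (Finset.prod_nonneg fun i _ => hμ0 _)
    split_ifs with hc
    · exact Finset.prod_nonneg fun i _ => (Real.exp_pos _).le
    · rw [not_le] at hc
      have ha : 0 < ∏ i, a (z i) := Finset.prod_pos fun i _ => (hab _ (hz i)).1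
      have hl := Real.log_lt_log ha hc
      rw [Real.log_mul (pow_pos (Real.exp_pos _) _).ne'
        (Finset.prod_pos fun i _ => (hab _ (hz i)).2).ne', Real.log_pow, Real.log_exp,
        Real.log_prod (fun i _ => (hab _ (hz i)).1.ne'),
        Real.log_prod (fun i _ => (hab _ (hz i)).2.ne')] at hl
      rw [← Real.exp_sum]
      refine Real.one_le_exp ?_
      rw [Finset.sum_neg_distrib, ← Finset.mul_sum, Finset.sum_sub_distrib, Finset.sum_sub_distrib]
      simp only [Finset.sum_const, Finset.card_univ, Fintype.card_fin, nsmul_eq_mul]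
      nlinarith
  · push Not at hz
    obtain ⟨i, hi⟩ := hz
    have h0 : ∏ i, μ (z i) = 0 :=
      Finset.prod_eq_zero (Finset.mem_univ i) (le_antisymm hi (hμ0 _))
    rw [h0, zero_mul, zero_mul]

/-- Blockwise marginals of a product pmf factorize. -/
theorem sum_pi_ite_forall (n : ℕ) (μ : Ω → ℝ) (K : Ω → α) (z : Fin n → Ω) :
    ∑ z' : Fin n → Ω, (if ∀ i, K (z' i) = K (z i) then ∏ i, μ (z' i) else 0) =
      ∏ i, prD μ K (K (z i)) := by
  simp only [prD]
  rw [← sum_pi_prod (fun i ω => if K ω = K (z i) then μ ω else 0)]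
  refine Finset.sum_congr rfl fun z' _ => ?_
  split_ifs with h
  · exact Finset.prod_congr rfl fun i _ => by rw [if_pos (h i)]
  · push Not at h
    obtain ⟨i, hi⟩ := h
    exact (Finset.prod_eq_zero (Finset.mem_univ i) (if_neg hi)).symm

/-- Conditional mutual information when `B` is produced from `A` and `C` by the kernel `k`. -/
theorem condMutInf_eq_of_kernel [Fintype α] [Fintype γ] (J : Ω × β → ℝ) (J0 : Ω → ℝ) (k : Ω → β → ℝ)
    (hJ : ∀ ω b, J (ω, b) = J0 ω * k ω b) (hk : ∀ ω, ∑ b, k ω b = 1)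
    (hpos : ∀ z, J z ≠ 0 → 0 < k z.1 z.2) (hnn : ∀ z, 0 ≤ J z)
    (A : Ω → α) (C : Ω → γ) (hdet : ∀ ω ω', A ω = A ω' → C ω = C ω' → k ω = k ω') :
    condMutInf J (fun z => A z.1) (fun z => z.2) (fun z => C z.1) =
      ∑ z, J z * (Real.log (k z.1 z.2) + Real.log (prD J (fun z => C z.1) (C z.1))) +
        ent J (fun z => (z.2, C z.1)) := by
  have hkey : ∀ z : Ω × β, prD J (fun z => (A z.1, (z.2, C z.1))) (A z.1, (z.2, C z.1)) =
      k z.1 z.2 * prD J (fun z => (A z.1, C z.1)) (A z.1, C z.1) := by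
    rintro ⟨ω, b⟩
    simp only [prD, Fintype.sum_prod_type, hJ, Prod.mk.injEq, Finset.mul_sum]
    refine Finset.sum_congr rfl fun ω' _ => ?_
    by_cases h : A ω' = A ω ∧ C ω' = C ω
    · simp only [h.1, h.2, true_and, and_true, if_true, Finset.sum_ite_eq', Finset.mem_univ]
      rw [← Finset.mul_sum, ← Finset.mul_sum, hk, hdet _ _ h.1 h.2]
      ring
    · rw [Finset.sum_eq_zero, Finset.sum_eq_zero]
      · intro b' _
        rw [if_neg h, mul_zero]
      · intro b' _
        rw [if_neg (by tauto)]
  simp only [condMutInf, condEnt]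
  rw [ent_eq_neg_sum J (fun z => (A z.1, (z.2, C z.1))), ent_eq_neg_sum J (fun z => (A z.1, C z.1)),
    ent_eq_neg_sum J (fun z => C z.1)]
  have : ∑ z, J z * Real.log (prD J (fun z => (A z.1, (z.2, C z.1))) (A z.1, (z.2, C z.1))) =
      ∑ z, J z * Real.log (k z.1 z.2) +
        ∑ z, J z * Real.log (prD J (fun z => (A z.1, C z.1)) (A z.1, C z.1)) := by
    rw [← Finset.sum_add_distrib]
    refine Finset.sum_congr rfl fun z _ => ?_
    by_cases hz : J z = 0
    · simp [hz]
    · have h1 : 0 < prD J (fun z => (A z.1, C z.1)) (A z.1, C z.1) :=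
        ((hnn z).lt_of_ne' hz).trans_le (le_prD hnn (fun z => (A z.1, C z.1)) z)
      rw [hkey, Real.log_mul (hpos z hz).ne' h1.ne']
      ring
  rw [this]
  simp_rw [mul_add, Finset.sum_add_distrib]
  ring

end FiniteProbability

/-- A two-user multiple access channel with one receiver, its source, and the distribution of a
superposition random code: cloud centres from `tq`, satellite codewords from `in1` and `in2`. -/
structure MacSystem (S1 S2 W Q U X1 X2 Y : Type) [Fintype S1] [Fintype S2] [Fintype W]
    [Fintype Q] [Fintype X1] [Fintype X2] [Fintype Y] where
  src : S1 → S2 → W → ℝ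
  tq : Q → ℝ
  in1 : Q → S1 → X1 → ℝ
  in2 : Q → S2 → X2 → ℝ
  chn : X1 → X2 → Y → ℝ
  c1 : S1 → U
  c2 : S2 → U
  src_nonneg : ∀ s1 s2 w, 0 ≤ src s1 s2 w
  src_sum : ∑ s1, ∑ s2, ∑ w, src s1 s2 w = 1
  tq_isPmf : IsPmf tq
  in1_isPmf : ∀ q s, IsPmf (in1 q s)
  in2_isPmf : ∀ q s, IsPmf (in2 q s)
  chn_isPmf : ∀ x1 x2, IsPmf (chn x1 x2)
  common : ∀ s1 s2 w, 0 < src s1 s2 w → c1 s1 = c2 s2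

/-- The average of `F` over the superposition random code. -/
def codeAvg {S1 S2 Q U X1 X2 : Type} [Fintype S1] [Fintype S2] [Fintype Q] [Fintype U]
    [Fintype X1] [Fintype X2] (tq : Q → ℝ) (in1 : Q → S1 → X1 → ℝ) (in2 : Q → S2 → X2 → ℝ)
    (c1 : S1 → U) (c2 : S2 → U) (F : (U → Q) → (S1 → X1) → (S2 → X2) → ℝ) : ℝ :=
  ∑ c : (U → Q) × (S1 → X1) × (S2 → X2),
    ((∏ u, tq (c.1 u)) * ((∏ s, in1 (c.1 (c1 s)) s (c.2.1 s)) *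
      ∏ s, in2 (c.1 (c2 s)) s (c.2.2 s))) * F c.1 c.2.1 c.2.2

namespace MacSystem

variable {S1 S2 W Q U X1 X2 Y : Type} [Fintype S1] [Fintype S2] [Fintype W]
    [Fintype Q] [Fintype U] [Fintype X1] [Fintype X2] [Fintype Y]
    (M : MacSystem S1 S2 W Q U X1 X2 Y)

/-- The joint pmf of time sharing, source, inputs and output. -/
def joint (z : (Q × S1 × S2 × W × X1 × X2) × Y) : ℝ :=
  M.tq z.1.1 * M.src z.1.2.1 z.1.2.2.1 z.1.2.2.2.1 * M.in1 z.1.1 z.1.2.1 z.1.2.2.2.2.1 *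
    M.in2 z.1.1 z.1.2.2.1 z.1.2.2.2.2.2 * M.chn z.1.2.2.2.2.1 z.1.2.2.2.2.2 z.2

/-- The variables known when only the first source is in error. -/
def view1 (z : (Q × S1 × S2 × W × X1 × X2) × Y) : Y × X2 × S2 × W × Q :=
  (z.2, (z.1.2.2.2.2.2, z.1.2.2.1, z.1.2.2.2.1, z.1.1))

/-- The variables known when only the second source is in error. -/
def view2 (z : (Q × S1 × S2 × W × X1 × X2) × Y) : Y × X1 × S1 × W × Q :=
  (z.2, (z.1.2.2.2.2.1, z.1.2.1, z.1.2.2.2.1, z.1.1))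

/-- The variables known when both sources are in error but the common part is correct. -/
def view3 (z : (Q × S1 × S2 × W × X1 × X2) × Y) : Y × U × W × Q :=
  (z.2, (M.c1 z.1.2.1, z.1.2.2.2.1, z.1.1))

/-- The variables known when the common part is in error. -/
def view4 (z : (Q × S1 × S2 × W × X1 × X2) × Y) : Y × W :=
  (z.2, z.1.2.2.2.1)

/-- The joint pmf without the generation of the first codeword. -/
def num1 (z : (Q × S1 × S2 × W × X1 × X2) × Y) : ℝ :=
  M.tq z.1.1 * M.src z.1.2.1 z.1.2.2.1 z.1.2.2.2.1 *
    M.in2 z.1.1 z.1.2.2.1 z.1.2.2.2.2.2 * M.chn z.1.2.2.2.2.1 z.1.2.2.2.2.2 z.2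

/-- The joint pmf without the generation of the second codeword. -/
def num2 (z : (Q × S1 × S2 × W × X1 × X2) × Y) : ℝ :=
  M.tq z.1.1 * M.src z.1.2.1 z.1.2.2.1 z.1.2.2.2.1 * M.in1 z.1.1 z.1.2.1 z.1.2.2.2.2.1 *
    M.chn z.1.2.2.2.2.1 z.1.2.2.2.2.2 z.2

/-- The joint pmf without the generation of both codewords. -/
def num3 (z : (Q × S1 × S2 × W × X1 × X2) × Y) : ℝ :=
  M.tq z.1.1 * M.src z.1.2.1 z.1.2.2.1 z.1.2.2.2.1 *
    M.chn z.1.2.2.2.2.1 z.1.2.2.2.2.2 z.2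

/-- The joint pmf without the generation of the cloud centre and of both codewords. -/
def num4 (z : (Q × S1 × S2 × W × X1 × X2) × Y) : ℝ :=
  M.src z.1.2.1 z.1.2.2.1 z.1.2.2.2.1 * M.chn z.1.2.2.2.2.1 z.1.2.2.2.2.2 z.2

/-- The threshold test of the decoder. -/
def Passes (E : ℝ) (z : (Q × S1 × S2 × W × X1 × X2) × Y) : Prop :=
  M.c1 z.1.2.1 = M.c2 z.1.2.2.1 ∧
    E * prD M.joint view1 (view1 z) ≤ M.num1 z ∧ E * prD M.joint view2 (view2 z) ≤ M.num2 z ∧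
    E * prD M.joint M.view3 (M.view3 z) ≤ M.num3 z ∧
    E * prD M.joint view4 (view4 z) ≤ M.num4 z

/-- The average over the random code of the system. -/
def avg (F : (U → Q) → (S1 → X1) → (S2 → X2) → ℝ) : ℝ :=
  codeAvg M.tq M.in1 M.in2 M.c1 M.c2 F

end MacSystem

section CodeAverage

variable {S1 S2 Q U X1 X2 : Type} [Fintype S1] [Fintype S2] [Fintype Q] [Fintype U]
    [Fintype X1] [Fintype X2] (tq : Q → ℝ) (in1 : Q → S1 → X1 → ℝ) (in2 : Q → S2 → X2 → ℝ)
    (c1 : S1 → U) (c2 : S2 → U)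

theorem codeAvg_add (F G : (U → Q) → (S1 → X1) → (S2 → X2) → ℝ) :
    codeAvg tq in1 in2 c1 c2 (fun a b c => F a b c + G a b c) =
      codeAvg tq in1 in2 c1 c2 F + codeAvg tq in1 in2 c1 c2 G := by
  simp only [codeAvg, mul_add, Finset.sum_add_distrib]

theorem codeAvg_sum {ι : Type} [Fintype ι] (F : ι → (U → Q) → (S1 → X1) → (S2 → X2) → ℝ) :
    codeAvg tq in1 in2 c1 c2 (fun a b c => ∑ i, F i a b c) =
      ∑ i, codeAvg tq in1 in2 c1 c2 (F i) := by
  simp only [codeAvg, Finset.mul_sum]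
  rw [Finset.sum_comm]

theorem codeAvg_const_mul (r : ℝ) (F : (U → Q) → (S1 → X1) → (S2 → X2) → ℝ) :
    codeAvg tq in1 in2 c1 c2 (fun a b c => r * F a b c) =
      r * codeAvg tq in1 in2 c1 c2 F := by
  simp only [codeAvg, Finset.mul_sum]
  exact Finset.sum_congr rfl fun c _ => by ring

theorem codeAvg_eq_nested (F : (U → Q) → (S1 → X1) → (S2 → X2) → ℝ) :
    codeAvg tq in1 in2 c1 c2 F =
      ∑ a : U → Q, (∏ u, tq (a u)) * ∑ b : S1 → X1, (∏ s, in1 (a (c1 s)) s (b s)) *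
        ∑ c : S2 → X2, (∏ s, in2 (a (c2 s)) s (c s)) * F a b c := by
  simp only [codeAvg, Fintype.sum_prod_type, Finset.mul_sum, mul_assoc]

variable {tq in1 in2} (htq : IsPmf tq) (hin1 : ∀ q s, IsPmf (in1 q s))
  (hin2 : ∀ q s, IsPmf (in2 q s))

include htq hin1 hin2

theorem codeAvg_mono {F G : (U → Q) → (S1 → X1) → (S2 → X2) → ℝ}
    (h : ∀ a b c, F a b c ≤ G a b c) :
    codeAvg tq in1 in2 c1 c2 F ≤ codeAvg tq in1 in2 c1 c2 G := by
  refine Finset.sum_le_sum fun c _ => mul_le_mul_of_nonneg_left (h _ _ _) ?_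
  exact mul_nonneg (Finset.prod_nonneg fun _ _ => htq.1 _) (mul_nonneg
    (Finset.prod_nonneg fun _ _ => (hin1 _ _).1 _) (Finset.prod_nonneg fun _ _ => (hin2 _ _).1 _))

theorem codeAvg_const (r : ℝ) : codeAvg tq in1 in2 c1 c2 (fun _ _ _ => r) = r := by
  have e2 : ∀ a : U → Q, ∑ c : S2 → X2, ∏ s, in2 (a (c2 s)) s (c s) = 1 := fun a => by
    rw [sum_pi_prod (fun s x => in2 (a (c2 s)) s x)]
    simp [(hin2 _ _).2]
  have e1 : ∀ a : U → Q, ∑ b : S1 → X1, ∏ s, in1 (a (c1 s)) s (b s) = 1 := fun a => by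
    rw [sum_pi_prod (fun s x => in1 (a (c1 s)) s x)]
    simp [(hin1 _ _).2]
  have e0 : ∑ a : U → Q, ∏ u, tq (a u) = 1 := by
    rw [sum_pi_prod (fun _ q => tq q)]
    simp [htq.2]
  simp only [codeAvg_eq_nested, ← Finset.sum_mul, e2, one_mul, e1, e0]

theorem exists_le_codeAvg (F : (U → Q) → (S1 → X1) → (S2 → X2) → ℝ) :
    ∃ a b c, F a b c ≤ codeAvg tq in1 in2 c1 c2 F := by
  by_contra! h
  set r := codeAvg tq in1 in2 c1 c2 F
  have hne : Nonempty ((U → Q) × (S1 → X1) × (S2 → X2)) := by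
    by_contra hemp
    rw [not_nonempty_iff] at hemp
    have := codeAvg_const c1 c2 htq hin1 hin2 (1 : ℝ)
    simp [codeAvg] at this
  obtain ⟨m, hm⟩ := Finite.exists_min
    (fun p : (U → Q) × (S1 → X1) × (S2 → X2) => F p.1 p.2.1 p.2.2)
  have h1 := codeAvg_mono c1 c2 htq hin1 hin2
    (F := fun _ _ _ => F m.1 m.2.1 m.2.2) (G := F) (fun a b c => hm (a, b, c))
  rw [codeAvg_const c1 c2 htq hin1 hin2] at h1
  exact absurd (h m.1 m.2.1 m.2.2) (not_lt.2 h1)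

theorem codeAvg_same {s1 : S1} {s2 : S2} (hu : c1 s1 = c2 s2) (F : Q → X1 → X2 → ℝ) :
    codeAvg tq in1 in2 c1 c2 (fun a b c => F (a (c1 s1)) (b s1) (c s2)) =
      ∑ q, tq q * ∑ x1, in1 q s1 x1 * ∑ x2, in2 q s2 x2 * F q x1 x2 := by
  rw [codeAvg_eq_nested]
  simp_rw [fun (a : U → Q) (b : S1 → X1) => sum_pi_mul_apply (fun s x => in2 (a (c2 s)) s x)
    (fun s => (hin2 _ _).2) s2 (fun x2 => F (a (c1 s1)) (b s1) x2),
    fun (a : U → Q) => sum_pi_mul_apply (fun s x => in1 (a (c1 s)) s x)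
    (fun s => (hin1 _ _).2) s1 (fun x1 => ∑ x2, in2 (a (c2 s2)) s2 x2 * F (a (c1 s1)) x1 x2), ← hu]
  exact sum_pi_mul_apply (fun _ q => tq q) (fun _ => htq.2) (c1 s1)
    (fun q => ∑ x1, in1 q s1 x1 * ∑ x2, in2 q s2 x2 * F q x1 x2)

theorem codeAvg_diff1 {s1 s1' : S1} {s2 : S2} (hu : c1 s1 = c2 s2) (hs1 : s1 ≠ s1')
    (hu1 : c1 s1 = c1 s1') (F : Q → X1 → X1 → X2 → ℝ) :
    codeAvg tq in1 in2 c1 c2 (fun a b c => F (a (c1 s1)) (b s1) (b s1') (c s2)) =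
      ∑ q, tq q * ∑ x1, in1 q s1 x1 * ∑ x1', in1 q s1' x1' *
        ∑ x2, in2 q s2 x2 * F q x1 x1' x2 := by
  rw [codeAvg_eq_nested]
  simp_rw [fun (a : U → Q) (b : S1 → X1) => sum_pi_mul_apply (fun s x => in2 (a (c2 s)) s x)
    (fun s => (hin2 _ _).2) s2 (fun x2 => F (a (c1 s1)) (b s1) (b s1') x2),
    fun (a : U → Q) => sum_pi_mul_apply₂ (fun s x => in1 (a (c1 s)) s x)
    (fun s => (hin1 _ _).2) hs1
    (fun x1 x1' => ∑ x2, in2 (a (c2 s2)) s2 x2 * F (a (c1 s1)) x1 x1' x2), ← hu, ← hu1]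
  exact sum_pi_mul_apply (fun _ q => tq q) (fun _ => htq.2) (c1 s1)
    (fun q => ∑ x1, in1 q s1 x1 * ∑ x1', in1 q s1' x1' * ∑ x2, in2 q s2 x2 * F q x1 x1' x2)

theorem codeAvg_diff2 {s1 : S1} {s2 s2' : S2} (hu : c1 s1 = c2 s2) (hs2 : s2 ≠ s2')
    (hu2 : c2 s2 = c2 s2') (F : Q → X1 → X2 → X2 → ℝ) :
    codeAvg tq in1 in2 c1 c2 (fun a b c => F (a (c1 s1)) (b s1) (c s2) (c s2')) =
      ∑ q, tq q * ∑ x1, in1 q s1 x1 * ∑ x2, in2 q s2 x2 *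
        ∑ x2', in2 q s2' x2' * F q x1 x2 x2' := by
  rw [codeAvg_eq_nested]
  simp_rw [fun (a : U → Q) (b : S1 → X1) => sum_pi_mul_apply₂ (fun s x => in2 (a (c2 s)) s x)
    (fun s => (hin2 _ _).2) hs2 (fun x2 x2' => F (a (c1 s1)) (b s1) x2 x2'),
    fun (a : U → Q) => sum_pi_mul_apply (fun s x => in1 (a (c1 s)) s x)
    (fun s => (hin1 _ _).2) s1 (fun x1 => ∑ x2, in2 (a (c2 s2)) s2 x2 *
        ∑ x2', in2 (a (c2 s2')) s2' x2' * F (a (c1 s1)) x1 x2 x2'), ← hu2, ← hu]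
  exact sum_pi_mul_apply (fun _ q => tq q) (fun _ => htq.2) (c1 s1)
    (fun q => ∑ x1, in1 q s1 x1 * ∑ x2, in2 q s2 x2 * ∑ x2', in2 q s2' x2' * F q x1 x2 x2')

theorem codeAvg_diff12 {s1 s1' : S1} {s2 s2' : S2} (hu : c1 s1 = c2 s2) (hs1 : s1 ≠ s1')
    (hs2 : s2 ≠ s2') (hu1 : c1 s1 = c1 s1') (hu2 : c2 s2 = c2 s2')
    (F : Q → X1 → X1 → X2 → X2 → ℝ) :
    codeAvg tq in1 in2 c1 c2 (fun a b c => F (a (c1 s1)) (b s1) (b s1') (c s2) (c s2')) =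
      ∑ q, tq q * ∑ x1, in1 q s1 x1 * ∑ x1', in1 q s1' x1' * ∑ x2, in2 q s2 x2 *
        ∑ x2', in2 q s2' x2' * F q x1 x1' x2 x2' := by
  rw [codeAvg_eq_nested]
  simp_rw [fun (a : U → Q) (b : S1 → X1) => sum_pi_mul_apply₂ (fun s x => in2 (a (c2 s)) s x)
    (fun s => (hin2 _ _).2) hs2 (fun x2 x2' => F (a (c1 s1)) (b s1) (b s1') x2 x2'),
    fun (a : U → Q) => sum_pi_mul_apply₂ (fun s x => in1 (a (c1 s)) s x)
    (fun s => (hin1 _ _).2) hs1 (fun x1 x1' => ∑ x2, in2 (a (c2 s2)) s2 x2 *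
        ∑ x2', in2 (a (c2 s2')) s2' x2' * F (a (c1 s1)) x1 x1' x2 x2'), ← hu2, ← hu, ← hu1]
  exact sum_pi_mul_apply (fun _ q => tq q) (fun _ => htq.2) (c1 s1)
    (fun q => ∑ x1, in1 q s1 x1 * ∑ x1', in1 q s1' x1' * ∑ x2, in2 q s2 x2 *
        ∑ x2', in2 q s2' x2' * F q x1 x1' x2 x2')

theorem codeAvg_diff_common {s1 s1' : S1} {s2 s2' : S2} (hu : c1 s1 = c2 s2)
    (hu' : c1 s1' = c2 s2') (hne : c1 s1 ≠ c1 s1') (F : Q → X1 → X1 → X2 → X2 → ℝ) :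
    codeAvg tq in1 in2 c1 c2 (fun a b c => F (a (c1 s1')) (b s1) (b s1') (c s2) (c s2')) =
      ∑ q, tq q * ∑ q', tq q' * ∑ x1, in1 q s1 x1 * ∑ x1', in1 q' s1' x1' *
        ∑ x2, in2 q s2 x2 * ∑ x2', in2 q' s2' x2' * F q' x1 x1' x2 x2' := by
  have hs1 : s1 ≠ s1' := fun h => hne (by rw [h])
  have hs2 : s2 ≠ s2' := fun h => hne (by rw [hu, hu', h])
  rw [codeAvg_eq_nested]
  simp_rw [fun (a : U → Q) (b : S1 → X1) => sum_pi_mul_apply₂ (fun s x => in2 (a (c2 s)) s x)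
    (fun s => (hin2 _ _).2) hs2 (fun x2 x2' => F (a (c1 s1')) (b s1) (b s1') x2 x2'),
    fun (a : U → Q) => sum_pi_mul_apply₂ (fun s x => in1 (a (c1 s)) s x)
    (fun s => (hin1 _ _).2) hs1 (fun x1 x1' => ∑ x2, in2 (a (c2 s2)) s2 x2 *
        ∑ x2', in2 (a (c2 s2')) s2' x2' * F (a (c1 s1')) x1 x1' x2 x2'), ← hu', ← hu]
  exact sum_pi_mul_apply₂ (fun _ q => tq q) (fun _ => htq.2) hne
    (fun q q' => ∑ x1, in1 q s1 x1 * ∑ x1', in1 q' s1' x1' * ∑ x2, in2 q s2 x2 *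
        ∑ x2', in2 q' s2' x2' * F q' x1 x1' x2 x2')

end CodeAverage

namespace MacSystem

variable {S1 S2 W Q U X1 X2 Y : Type} [Fintype S1] [Fintype S2] [Fintype W]
    [Fintype Q] [Fintype X1] [Fintype X2] [Fintype Y]
    (M : MacSystem S1 S2 W Q U X1 X2 Y)

theorem joint_nonneg (z : (Q × S1 × S2 × W × X1 × X2) × Y) : 0 ≤ M.joint z :=
  mul_nonneg (mul_nonneg (mul_nonneg (mul_nonneg (M.tq_isPmf.1 _) (M.src_nonneg _ _ _))
    ((M.in1_isPmf _ _).1 _)) ((M.in2_isPmf _ _).1 _)) ((M.chn_isPmf _ _).1 _)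

theorem joint_sum : ∑ z, M.joint z = 1 := by
  simp only [joint, Fintype.sum_prod_type, ← Finset.mul_sum, (M.chn_isPmf _ _).2, mul_one,
    (M.in2_isPmf _ _).2, (M.in1_isPmf _ _).2, M.src_sum, M.tq_isPmf.2]

/-- The expected number of competitors passing a threshold test is small. -/
theorem sum_passes_le {α : Type} (K : (Q × S1 × S2 × W × X1 × X2) × Y → α)
    (m a : (Q × S1 × S2 × W × X1 × X2) × Y → ℝ) (hm : ∀ z, 0 ≤ m z)
    (ha : ∀ z, 0 ≤ a z) (hma : ∀ z, m z * a z = M.joint z) {E : ℝ} (hE : 0 < E)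
    (P : (Q × S1 × S2 × W × X1 × X2) × Y → Prop)
    (hP : ∀ z, P z → E * prD M.joint K (K z) ≤ a z) :
    ∑ z, m z * (prD M.joint K (K z) * if P z then 1 else 0) ≤ 1 / E := by
  rw [le_div_iff₀ hE, Finset.sum_mul]
  refine le_trans ?_ M.joint_sum.le
  refine Finset.sum_le_sum fun z _ => ?_
  rw [← hma z, mul_assoc]
  refine mul_le_mul_of_nonneg_left ?_ (hm z)
  split_ifs with h
  · linarith [hP z h]
  · simpa using ha z

theorem sum_diff1 (I : (Q × S1 × S2 × W × X1 × X2) × Y → ℝ) :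
    ∑ r : S1 × S2 × W × Y, M.src r.1 r.2.1 r.2.2.1 * ∑ s1', ∑ q, M.tq q *
      ∑ x1, M.in1 q r.1 x1 * ∑ x1', M.in1 q s1' x1' * ∑ x2, M.in2 q r.2.1 x2 *
        (M.chn x1 x2 r.2.2.2 * I ((q, s1', r.2.1, r.2.2.1, x1', x2), r.2.2.2)) =
    ∑ z, M.in1 z.1.1 z.1.2.1 z.1.2.2.2.2.1 * (prD M.joint view1 (view1 z) * I z) := by
  have hp : ∀ z : (Q × S1 × S2 × W × X1 × X2) × Y, prD M.joint view1 (view1 z) = ∑ s1, ∑ x1,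
      M.joint ((z.1.1, s1, z.1.2.2.1, z.1.2.2.2.1, x1, z.1.2.2.2.2.2), z.2) := by
    rintro ⟨⟨q, s1, s2, w, x1, x2⟩, y⟩
    have : prD M.joint view1 (view1 ((q, s1, s2, w, x1, x2), y)) = ∑ q', ∑ s1', ∑ s2', ∑ w',
        ∑ x1', ∑ x2', ∑ y', if y' = y then if x2' = x2 then if s2' = s2 then if w' = w then
          if q' = q then M.joint ((q', s1', s2', w', x1', x2'), y') else 0 else 0 else 0 else 0
          else 0 := by
      simp only [prD, view1, Fintype.sum_prod_type, Prod.mk.injEq, ite_and]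
    rw [this]
    simp
  calc _ = ∑ p : (S1 × S2 × W × Y) × S1 × Q × X1 × X1 × X2,
        M.src p.1.1 p.1.2.1 p.1.2.2.1 * (M.tq p.2.2.1 * (M.in1 p.2.2.1 p.1.1 p.2.2.2.1 *
          (M.in1 p.2.2.1 p.2.1 p.2.2.2.2.1 * (M.in2 p.2.2.1 p.1.2.1 p.2.2.2.2.2 *
          (M.chn p.2.2.2.1 p.2.2.2.2.2 p.1.2.2.2 * I ((p.2.2.1, p.2.1, p.1.2.1, p.1.2.2.1,
            p.2.2.2.2.1, p.2.2.2.2.2), p.1.2.2.2)))))) := by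
        simp only [Fintype.sum_prod_type, Finset.mul_sum]
    _ = ∑ p : ((Q × S1 × S2 × W × X1 × X2) × Y) × S1 × X1,
        M.in1 p.1.1.1 p.1.1.2.1 p.1.1.2.2.2.2.1 * (M.joint ((p.1.1.1, p.2.1, p.1.1.2.2.1,
          p.1.1.2.2.2.1, p.2.2, p.1.1.2.2.2.2.2), p.1.2) * I p.1) := by
        refine Fintype.sum_equiv
          ⟨fun ⟨⟨s1, s2, w, y⟩, s1', q, x1, x1', x2⟩ => (((q, s1', s2, w, x1', x2), y), s1, x1),
           fun ⟨⟨⟨q, s1', s2, w, x1', x2⟩, y⟩, s1, x1⟩ => ((s1, s2, w, y), s1', q, x1, x1', x2),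
           fun _ => rfl, fun _ => rfl⟩ _ _ fun _ => ?_
        simp only [joint, Equiv.coe_fn_mk]
        ring
    _ = _ := by
        simp only [hp, Fintype.sum_prod_type, Finset.mul_sum, Finset.sum_mul]

theorem sum_diff2 (I : (Q × S1 × S2 × W × X1 × X2) × Y → ℝ) :
    ∑ r : S1 × S2 × W × Y, M.src r.1 r.2.1 r.2.2.1 * ∑ s2', ∑ q, M.tq q *
      ∑ x1, M.in1 q r.1 x1 * ∑ x2, M.in2 q r.2.1 x2 * ∑ x2', M.in2 q s2' x2' *
        (M.chn x1 x2 r.2.2.2 * I ((q, r.1, s2', r.2.2.1, x1, x2'), r.2.2.2)) =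
    ∑ z, M.in2 z.1.1 z.1.2.2.1 z.1.2.2.2.2.2 * (prD M.joint view2 (view2 z) * I z) := by
  have hp : ∀ z : (Q × S1 × S2 × W × X1 × X2) × Y, prD M.joint view2 (view2 z) = ∑ s2, ∑ x2,
      M.joint ((z.1.1, z.1.2.1, s2, z.1.2.2.2.1, z.1.2.2.2.2.1, x2), z.2) := by
    rintro ⟨⟨q, s1, s2, w, x1, x2⟩, y⟩
    have : prD M.joint view2 (view2 ((q, s1, s2, w, x1, x2), y)) = ∑ q', ∑ s1', ∑ s2', ∑ w',
        ∑ x1', ∑ x2', ∑ y', if y' = y then if x1' = x1 then if s1' = s1 then if w' = w then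
          if q' = q then M.joint ((q', s1', s2', w', x1', x2'), y') else 0 else 0 else 0 else 0
          else 0 := by
      simp only [prD, view2, Fintype.sum_prod_type, Prod.mk.injEq, ite_and]
    rw [this]
    simp
  calc _ = ∑ p : (S1 × S2 × W × Y) × S2 × Q × X1 × X2 × X2,
        M.src p.1.1 p.1.2.1 p.1.2.2.1 * (M.tq p.2.2.1 * (M.in1 p.2.2.1 p.1.1 p.2.2.2.1 *
          (M.in2 p.2.2.1 p.1.2.1 p.2.2.2.2.1 * (M.in2 p.2.2.1 p.2.1 p.2.2.2.2.2 *
          (M.chn p.2.2.2.1 p.2.2.2.2.1 p.1.2.2.2 * I ((p.2.2.1, p.1.1, p.2.1, p.1.2.2.1,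
            p.2.2.2.1, p.2.2.2.2.2), p.1.2.2.2)))))) := by
        simp only [Fintype.sum_prod_type, Finset.mul_sum]
    _ = ∑ p : ((Q × S1 × S2 × W × X1 × X2) × Y) × S2 × X2,
        M.in2 p.1.1.1 p.1.1.2.2.1 p.1.1.2.2.2.2.2 * (M.joint ((p.1.1.1, p.1.1.2.1, p.2.1,
          p.1.1.2.2.2.1, p.1.1.2.2.2.2.1, p.2.2), p.1.2) * I p.1) := by
        refine Fintype.sum_equiv
          ⟨fun ⟨⟨s1, s2, w, y⟩, s2', q, x1, x2, x2'⟩ => (((q, s1, s2', w, x1, x2'), y), s2, x2),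
           fun ⟨⟨⟨q, s1, s2', w, x1, x2'⟩, y⟩, s2, x2⟩ => ((s1, s2, w, y), s2', q, x1, x2, x2'),
           fun _ => rfl, fun _ => rfl⟩ _ _ fun _ => ?_
        simp only [joint, Equiv.coe_fn_mk]
        ring
    _ = _ := by
        simp only [hp, Fintype.sum_prod_type, Finset.mul_sum, Finset.sum_mul]

set_option maxHeartbeats 4000000 in
theorem sum_diff12 (I : (Q × S1 × S2 × W × X1 × X2) × Y → ℝ) :
    ∑ r : S1 × S2 × W × Y, M.src r.1 r.2.1 r.2.2.1 * ∑ s1', ∑ s2',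
      (if M.c1 r.1 = M.c1 s1' then 1 else 0) * ∑ q, M.tq q *
      ∑ x1, M.in1 q r.1 x1 * ∑ x1', M.in1 q s1' x1' *
      ∑ x2, M.in2 q r.2.1 x2 * ∑ x2', M.in2 q s2' x2' *
        (M.chn x1 x2 r.2.2.2 * I ((q, s1', s2', r.2.2.1, x1', x2'), r.2.2.2)) =
    ∑ z, (M.in1 z.1.1 z.1.2.1 z.1.2.2.2.2.1 * M.in2 z.1.1 z.1.2.2.1 z.1.2.2.2.2.2) *
      (prD M.joint M.view3 (M.view3 z) * I z) := by
  have hp : ∀ z : (Q × S1 × S2 × W × X1 × X2) × Y, prD M.joint M.view3 (M.view3 z) =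
      ∑ s1, ∑ s2, ∑ x1, ∑ x2, (if M.c1 s1 = M.c1 z.1.2.1 then 1 else 0) *
        M.joint ((z.1.1, s1, s2, z.1.2.2.2.1, x1, x2), z.2) := by
    rintro ⟨⟨q, s1, s2, w, x1, x2⟩, y⟩
    have : prD M.joint M.view3 (M.view3 ((q, s1, s2, w, x1, x2), y)) = ∑ q', ∑ s1', ∑ s2', ∑ w',
        ∑ x1', ∑ x2', ∑ y', if y' = y then if M.c1 s1' = M.c1 s1 then if w' = w then
          if q' = q then M.joint ((q', s1', s2', w', x1', x2'), y') else 0 else 0 else 0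
          else 0 := by
      simp only [prD, view3, Fintype.sum_prod_type, Prod.mk.injEq, ite_and]
    rw [this]
    simp
    rw [Finset.sum_comm]
    simp
  calc _ = ∑ p : (S1 × S2 × W × Y) × S1 × S2 × Q × X1 × X1 × X2 × X2,
        M.src p.1.1 p.1.2.1 p.1.2.2.1 * ((if M.c1 p.1.1 = M.c1 p.2.1 then 1 else 0) *
          (M.tq p.2.2.2.1 * (M.in1 p.2.2.2.1 p.1.1 p.2.2.2.2.1 *
          (M.in1 p.2.2.2.1 p.2.1 p.2.2.2.2.2.1 *
          (M.in2 p.2.2.2.1 p.1.2.1 p.2.2.2.2.2.2.1 * (M.in2 p.2.2.2.1 p.2.2.1 p.2.2.2.2.2.2.2 *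
          (M.chn p.2.2.2.2.1 p.2.2.2.2.2.2.1 p.1.2.2.2 * I ((p.2.2.2.1, p.2.1, p.2.2.1, p.1.2.2.1,
            p.2.2.2.2.2.1, p.2.2.2.2.2.2.2), p.1.2.2.2)))))))) := by
        simp (maxSteps := 1000000) only [Fintype.sum_prod_type, Finset.mul_sum]
    _ = ∑ p : ((Q × S1 × S2 × W × X1 × X2) × Y) × S1 × S2 × X1 × X2,
        (M.in1 p.1.1.1 p.1.1.2.1 p.1.1.2.2.2.2.1 * M.in2 p.1.1.1 p.1.1.2.2.1 p.1.1.2.2.2.2.2) *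
        ((if M.c1 p.2.1 = M.c1 p.1.1.2.1 then 1 else 0) * M.joint ((p.1.1.1, p.2.1, p.2.2.1,
          p.1.1.2.2.2.1, p.2.2.2.1, p.2.2.2.2), p.1.2) * I p.1) := by
        refine Fintype.sum_equiv
          ⟨fun ⟨⟨s1, s2, w, y⟩, s1', s2', q, x1, x1', x2, x2'⟩ =>
            (((q, s1', s2', w, x1', x2'), y), s1, s2, x1, x2),
           fun ⟨⟨⟨q, s1', s2', w, x1', x2'⟩, y⟩, s1, s2, x1, x2⟩ =>
            ((s1, s2, w, y), s1', s2', q, x1, x1', x2, x2'),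
           fun _ => rfl, fun _ => rfl⟩ _ _ fun _ => ?_
        simp only [joint, Equiv.coe_fn_mk]
        ring
    _ = _ := by
        simp (maxSteps := 1000000) only [hp, Fintype.sum_prod_type, Finset.mul_sum, Finset.sum_mul]

set_option maxHeartbeats 4000000 in
theorem sum_diff_common (I : (Q × S1 × S2 × W × X1 × X2) × Y → ℝ) :
    ∑ r : S1 × S2 × W × Y, M.src r.1 r.2.1 r.2.2.1 * ∑ s1', ∑ s2', ∑ q, M.tq q * ∑ q', M.tq q' *
      ∑ x1, M.in1 q r.1 x1 * ∑ x1', M.in1 q' s1' x1' *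
      ∑ x2, M.in2 q r.2.1 x2 * ∑ x2', M.in2 q' s2' x2' *
        (M.chn x1 x2 r.2.2.2 * I ((q', s1', s2', r.2.2.1, x1', x2'), r.2.2.2)) =
    ∑ z, (M.tq z.1.1 * M.in1 z.1.1 z.1.2.1 z.1.2.2.2.2.1 *
      M.in2 z.1.1 z.1.2.2.1 z.1.2.2.2.2.2) * (prD M.joint view4 (view4 z) * I z) := by
  have hp : ∀ z : (Q × S1 × S2 × W × X1 × X2) × Y, prD M.joint view4 (view4 z) =
      ∑ q, ∑ s1, ∑ s2, ∑ x1, ∑ x2, M.joint ((q, s1, s2, z.1.2.2.2.1, x1, x2), z.2) := by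
    rintro ⟨⟨q, s1, s2, w, x1, x2⟩, y⟩
    have : prD M.joint view4 (view4 ((q, s1, s2, w, x1, x2), y)) = ∑ q', ∑ s1', ∑ s2', ∑ w',
        ∑ x1', ∑ x2', ∑ y', if y' = y then if w' = w then
          M.joint ((q', s1', s2', w', x1', x2'), y') else 0 else 0 := by
      simp only [prD, view4, Fintype.sum_prod_type, Prod.mk.injEq, ite_and]
    rw [this]
    simp
  calc _ = ∑ p : (S1 × S2 × W × Y) × S1 × S2 × Q × Q × X1 × X1 × X2 × X2,
        M.src p.1.1 p.1.2.1 p.1.2.2.1 * (M.tq p.2.2.2.1 * (M.tq p.2.2.2.2.1 *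
          (M.in1 p.2.2.2.1 p.1.1 p.2.2.2.2.2.1 *
          (M.in1 p.2.2.2.2.1 p.2.1 p.2.2.2.2.2.2.1 *
          (M.in2 p.2.2.2.1 p.1.2.1 p.2.2.2.2.2.2.2.1 *
          (M.in2 p.2.2.2.2.1 p.2.2.1 p.2.2.2.2.2.2.2.2 *
          (M.chn p.2.2.2.2.2.1 p.2.2.2.2.2.2.2.1 p.1.2.2.2 * I ((p.2.2.2.2.1, p.2.1, p.2.2.1,
            p.1.2.2.1, p.2.2.2.2.2.2.1, p.2.2.2.2.2.2.2.2), p.1.2.2.2)))))))) := by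
        simp (maxSteps := 1000000) only [Fintype.sum_prod_type, Finset.mul_sum]
    _ = ∑ p : ((Q × S1 × S2 × W × X1 × X2) × Y) × Q × S1 × S2 × X1 × X2,
        (M.tq p.1.1.1 * M.in1 p.1.1.1 p.1.1.2.1 p.1.1.2.2.2.2.1 *
          M.in2 p.1.1.1 p.1.1.2.2.1 p.1.1.2.2.2.2.2) *
        (M.joint ((p.2.1, p.2.2.1, p.2.2.2.1, p.1.1.2.2.2.1, p.2.2.2.2.1, p.2.2.2.2.2), p.1.2) *
          I p.1) := by
        refine Fintype.sum_equiv
          ⟨fun ⟨⟨s1, s2, w, y⟩, s1', s2', q, q', x1, x1', x2, x2'⟩ =>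
            (((q', s1', s2', w, x1', x2'), y), q, s1, s2, x1, x2),
           fun ⟨⟨⟨q', s1', s2', w, x1', x2'⟩, y⟩, q, s1, s2, x1, x2⟩ =>
            ((s1, s2, w, y), s1', s2', q, q', x1, x1', x2, x2'),
           fun _ => rfl, fun _ => rfl⟩ _ _ fun _ => ?_
        simp only [joint, Equiv.coe_fn_mk]
        ring
    _ = _ := by
        simp (maxSteps := 1000000) only [hp, Fintype.sum_prod_type, Finset.mul_sum, Finset.sum_mul]

theorem sum_same (I : (Q × S1 × S2 × W × X1 × X2) × Y → ℝ) :
    ∑ r : S1 × S2 × W × Y, M.src r.1 r.2.1 r.2.2.1 * ∑ q, M.tq q *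
      ∑ x1, M.in1 q r.1 x1 * ∑ x2, M.in2 q r.2.1 x2 *
        (M.chn x1 x2 r.2.2.2 * I ((q, r.1, r.2.1, r.2.2.1, x1, x2), r.2.2.2)) =
    ∑ z, M.joint z * I z := by
  calc _ = ∑ p : (S1 × S2 × W × Y) × Q × X1 × X2,
        M.src p.1.1 p.1.2.1 p.1.2.2.1 * (M.tq p.2.1 * (M.in1 p.2.1 p.1.1 p.2.2.1 *
          (M.in2 p.2.1 p.1.2.1 p.2.2.2 * (M.chn p.2.2.1 p.2.2.2 p.1.2.2.2 *
          I ((p.2.1, p.1.1, p.1.2.1, p.1.2.2.1, p.2.2.1, p.2.2.2), p.1.2.2.2))))) := by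
        simp only [Fintype.sum_prod_type, Finset.mul_sum]
    _ = _ := by
        refine Fintype.sum_equiv
          ⟨fun ⟨⟨s1, s2, w, y⟩, q, x1, x2⟩ => ((q, s1, s2, w, x1, x2), y),
           fun ⟨⟨q, s1, s2, w, x1, x2⟩, y⟩ => ((s1, s2, w, y), q, x1, x2),
           fun _ => rfl, fun _ => rfl⟩ _ _ fun _ => ?_
        simp only [joint, Equiv.coe_fn_mk]
        ring

end MacSystem

theorem IsPmf.sum_mul_nonneg {α : Type} [Fintype α] {p : α → ℝ} (hp : IsPmf p) {f : α → ℝ}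
    (hf : ∀ a, 0 ≤ f a) : 0 ≤ ∑ a, p a * f a :=
  Finset.sum_nonneg fun a _ => mul_nonneg (hp.1 a) (hf a)

theorem sum_mul_le_sum_mul {α : Type} [Fintype α] {p f g : α → ℝ} (hp : ∀ a, 0 ≤ p a)
    (h : ∀ a, 0 < p a → f a ≤ g a) : ∑ a, p a * f a ≤ ∑ a, p a * g a := by
  refine Finset.sum_le_sum fun a _ => ?_
  rcases (hp a).eq_or_lt with h0 | h0
  · rw [← h0, zero_mul, zero_mul]
  · exact mul_le_mul_of_nonneg_left (h a h0) h0.le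

namespace MacSystem

variable {S1 S2 W Q U X1 X2 Y : Type} [Fintype S1] [Fintype S2] [Fintype W]
    [Fintype Q] [Fintype X1] [Fintype X2] [Fintype Y]
    (M : MacSystem S1 S2 W Q U X1 X2 Y)

/-- The decoder declaring the unique source pair that passes the threshold test. -/
def decoder [Nonempty S1] [Nonempty S2] (E : ℝ) (a : U → Q) (b : S1 → X1) (c : S2 → X2)
    (y : Y) (w : W) : S1 × S2 :=
  if h : ∃! p : S1 × S2, M.Passes E ((a (M.c1 p.1), p.1, p.2, w, b p.1, c p.2), y) then h.choose
  else Classical.arbitrary _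

theorem decoder_error_le [Nonempty S1] [Nonempty S2] (E : ℝ) (a : U → Q) (b : S1 → X1)
    (c : S2 → X2) (y : Y) (w : W) (s1 : S1) (s2 : S2) (hc : M.c1 s1 = M.c2 s2) :
    (if M.decoder E a b c y w = (s1, s2) then (0 : ℝ) else 1) ≤
      (if M.Passes E ((a (M.c1 s1), s1, s2, w, b s1, c s2), y) then 0 else 1) +
      (∑ s1', if s1 ≠ s1' ∧ M.c1 s1 = M.c1 s1' then
        if M.Passes E ((a (M.c1 s1), s1', s2, w, b s1', c s2), y) then 1 else 0 else 0) +
      (∑ s2', if s2 ≠ s2' ∧ M.c2 s2 = M.c2 s2' then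
        if M.Passes E ((a (M.c1 s1), s1, s2', w, b s1, c s2'), y) then 1 else 0 else 0) +
      (∑ s1', ∑ s2', if s1 ≠ s1' ∧ s2 ≠ s2' ∧ M.c1 s1 = M.c1 s1' ∧ M.c2 s2 = M.c2 s2' then
        if M.Passes E ((a (M.c1 s1), s1', s2', w, b s1', c s2'), y) then 1 else 0 else 0) +
      (∑ s1', ∑ s2', if M.c1 s1' = M.c2 s2' ∧ M.c1 s1 ≠ M.c1 s1' then
        if M.Passes E ((a (M.c1 s1'), s1', s2', w, b s1', c s2'), y) then 1 else 0 else 0) := by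
  set T0 : ℝ := if M.Passes E ((a (M.c1 s1), s1, s2, w, b s1, c s2), y) then 0 else 1 with hT0
  set F1 : S1 → ℝ := fun s1' => if s1 ≠ s1' ∧ M.c1 s1 = M.c1 s1' then
        if M.Passes E ((a (M.c1 s1), s1', s2, w, b s1', c s2), y) then 1 else 0 else 0 with hF1
  set F2 : S2 → ℝ := fun s2' => if s2 ≠ s2' ∧ M.c2 s2 = M.c2 s2' then
        if M.Passes E ((a (M.c1 s1), s1, s2', w, b s1, c s2'), y) then 1 else 0 else 0 with hF2
  set F3 : S1 → S2 → ℝ := fun s1' s2' =>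
    if s1 ≠ s1' ∧ s2 ≠ s2' ∧ M.c1 s1 = M.c1 s1' ∧ M.c2 s2 = M.c2 s2' then
      if M.Passes E ((a (M.c1 s1), s1', s2', w, b s1', c s2'), y) then 1 else 0 else 0 with hF3
  set F4 : S1 → S2 → ℝ := fun s1' s2' => if M.c1 s1' = M.c2 s2' ∧ M.c1 s1 ≠ M.c1 s1' then
      if M.Passes E ((a (M.c1 s1'), s1', s2', w, b s1', c s2'), y) then 1 else 0 else 0 with hF4
  have n0 : 0 ≤ T0 := by rw [hT0]; positivity
  have n1 : ∀ s, 0 ≤ F1 s := fun s => by simp only [hF1]; positivity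
  have n2 : ∀ s, 0 ≤ F2 s := fun s => by simp only [hF2]; positivity
  have n3 : ∀ s t, 0 ≤ F3 s t := fun s t => by simp only [hF3]; positivity
  have n4 : ∀ s t, 0 ≤ F4 s t := fun s t => by simp only [hF4]; positivity
  have m1 := Finset.sum_nonneg fun s (_ : s ∈ Finset.univ) => n1 s
  have m2 := Finset.sum_nonneg fun s (_ : s ∈ Finset.univ) => n2 s
  have m3 := Finset.sum_nonneg fun s (_ : s ∈ Finset.univ) =>
    Finset.sum_nonneg fun t (_ : t ∈ Finset.univ) => n3 s t
  have m4 := Finset.sum_nonneg fun s (_ : s ∈ Finset.univ) =>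
    Finset.sum_nonneg fun t (_ : t ∈ Finset.univ) => n4 s t
  split_ifs with hd
  · linarith
  by_cases hP : M.Passes E ((a (M.c1 s1), s1, s2, w, b s1, c s2), y)
  swap
  · have : T0 = 1 := by rw [hT0, if_neg hP]
    linarith
  have hex : ∃ p : S1 × S2, p ≠ (s1, s2) ∧
      M.Passes E ((a (M.c1 p.1), p.1, p.2, w, b p.1, c p.2), y) := by
    by_contra! hno
    have hu : ∃! p : S1 × S2, M.Passes E ((a (M.c1 p.1), p.1, p.2, w, b p.1, c p.2), y) :=
      ⟨(s1, s2), hP, fun p hp => by_contra fun hne => hno p hne hp⟩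
    refine hd ?_
    rw [decoder, dif_pos hu]
    exact hu.unique hu.choose_spec.1 hP
  obtain ⟨⟨s1', s2'⟩, hne, hP'⟩ := hex
  have hc' : M.c1 s1' = M.c2 s2' := hP'.1
  by_cases h1 : M.c1 s1 = M.c1 s1'
  · have h2 : M.c2 s2 = M.c2 s2' := by rw [← hc, h1, hc']
    simp only [← h1] at hP'
    by_cases e1 : s1 = s1'
    · subst e1
      have e2 : s2 ≠ s2' := fun h => hne (by rw [h])
      have : F2 s2' = 1 := by simp only [hF2]; rw [if_pos ⟨e2, h2⟩, if_pos hP']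
      have := Finset.single_le_sum (fun s _ => n2 s) (Finset.mem_univ s2')
      linarith
    · by_cases e2 : s2 = s2'
      · subst e2
        have : F1 s1' = 1 := by simp only [hF1]; rw [if_pos ⟨e1, h1⟩, if_pos hP']
        have := Finset.single_le_sum (fun s _ => n1 s) (Finset.mem_univ s1')
        linarith
      · have : F3 s1' s2' = 1 := by
          simp only [hF3]; rw [if_pos ⟨e1, e2, h1, h2⟩, if_pos hP']
        have := Finset.single_le_sum (fun s _ => n3 s1' s) (Finset.mem_univ s2')
        have := Finset.single_le_sum (f := fun s => ∑ t, F3 s t)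
          (fun s _ => Finset.sum_nonneg fun t _ => n3 s t)
          (Finset.mem_univ s1')
        linarith
  · have : F4 s1' s2' = 1 := by simp only [hF4]; rw [if_pos ⟨hc', h1⟩, if_pos hP']
    have := Finset.single_le_sum (fun s _ => n4 s1' s) (Finset.mem_univ s2')
    have := Finset.single_le_sum (f := fun s => ∑ t, F4 s t)
          (fun s _ => Finset.sum_nonneg fun t _ => n4 s t)
      (Finset.mem_univ s1')
    linarith

theorem avg_decoder_error_le [Fintype U] [Nonempty S1] [Nonempty S2] (E : ℝ) (s1 : S1) (s2 : S2)
    (w : W) (y : Y) (hc : M.c1 s1 = M.c2 s2) :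
    M.avg (fun a b c => M.chn (b s1) (c s2) y *
      if M.decoder E a b c y w = (s1, s2) then (0 : ℝ) else 1) ≤
    (∑ q, M.tq q * ∑ x1, M.in1 q s1 x1 * ∑ x2, M.in2 q s2 x2 * (M.chn x1 x2 y *
      if M.Passes E ((q, s1, s2, w, x1, x2), y) then 0 else 1)) +
    (∑ s1', ∑ q, M.tq q * ∑ x1, M.in1 q s1 x1 * ∑ x1', M.in1 q s1' x1' *
      ∑ x2, M.in2 q s2 x2 * (M.chn x1 x2 y *
      if M.Passes E ((q, s1', s2, w, x1', x2), y) then 1 else 0)) +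
    (∑ s2', ∑ q, M.tq q * ∑ x1, M.in1 q s1 x1 * ∑ x2, M.in2 q s2 x2 *
      ∑ x2', M.in2 q s2' x2' * (M.chn x1 x2 y *
      if M.Passes E ((q, s1, s2', w, x1, x2'), y) then 1 else 0)) +
    (∑ s1', ∑ s2', (if M.c1 s1 = M.c1 s1' then 1 else 0) * ∑ q, M.tq q *
      ∑ x1, M.in1 q s1 x1 * ∑ x1', M.in1 q s1' x1' *
      ∑ x2, M.in2 q s2 x2 * ∑ x2', M.in2 q s2' x2' * (M.chn x1 x2 y *
      if M.Passes E ((q, s1', s2', w, x1', x2'), y) then 1 else 0)) +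
    (∑ s1', ∑ s2', ∑ q, M.tq q * ∑ q', M.tq q' *
      ∑ x1, M.in1 q s1 x1 * ∑ x1', M.in1 q' s1' x1' *
      ∑ x2, M.in2 q s2 x2 * ∑ x2', M.in2 q' s2' x2' * (M.chn x1 x2 y *
      if M.Passes E ((q', s1', s2', w, x1', x2'), y) then 1 else 0)) := by
  have hnn : ∀ (x1 : X1) (x2 : X2) (p : Prop), 0 ≤ M.chn x1 x2 y * if p then (1 : ℝ) else 0 :=
    fun x1 x2 p => mul_nonneg ((M.chn_isPmf _ _).1 _) (by positivity)
  refine le_trans (codeAvg_mono M.c1 M.c2 M.tq_isPmf M.in1_isPmf M.in2_isPmf fun a b c =>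
    mul_le_mul_of_nonneg_left (M.decoder_error_le E a b c y w s1 s2 hc)
      ((M.chn_isPmf _ _).1 _)) ?_
  conv_lhs => simp only [mul_add, Finset.mul_sum]
  rw [codeAvg_add, codeAvg_add, codeAvg_add, codeAvg_add, codeAvg_sum, codeAvg_sum, codeAvg_sum,
    codeAvg_sum]
  simp only [codeAvg_sum]
  have hzero : codeAvg M.tq M.in1 M.in2 M.c1 M.c2 (fun _ _ _ => (0 : ℝ)) = 0 :=
    codeAvg_const M.c1 M.c2 M.tq_isPmf M.in1_isPmf M.in2_isPmf 0
  refine add_le_add (add_le_add (add_le_add (add_le_add ?_ ?_) ?_) ?_) ?_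
  · exact (codeAvg_same M.c1 M.c2 M.tq_isPmf M.in1_isPmf M.in2_isPmf hc fun q x1 x2 =>
      M.chn x1 x2 y * if M.Passes E ((q, s1, s2, w, x1, x2), y) then 0 else 1).le
  · refine Finset.sum_le_sum fun s1' _ => ?_
    by_cases h : s1 ≠ s1' ∧ M.c1 s1 = M.c1 s1'
    · simp only [if_pos h]
      exact (codeAvg_diff1 M.c1 M.c2 M.tq_isPmf M.in1_isPmf M.in2_isPmf hc h.1 h.2
        fun q x1 x1' x2 => M.chn x1 x2 y *
          if M.Passes E ((q, s1', s2, w, x1', x2), y) then 1 else 0).le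
    · simp only [if_neg h, mul_zero, hzero]
      exact M.tq_isPmf.sum_mul_nonneg fun _ => (M.in1_isPmf _ _).sum_mul_nonneg fun _ =>
        (M.in1_isPmf _ _).sum_mul_nonneg fun _ => (M.in2_isPmf _ _).sum_mul_nonneg fun _ =>
        hnn _ _ _
  · refine Finset.sum_le_sum fun s2' _ => ?_
    by_cases h : s2 ≠ s2' ∧ M.c2 s2 = M.c2 s2'
    · simp only [if_pos h]
      exact (codeAvg_diff2 M.c1 M.c2 M.tq_isPmf M.in1_isPmf M.in2_isPmf hc h.1 h.2
        fun q x1 x2 x2' => M.chn x1 x2 y *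
          if M.Passes E ((q, s1, s2', w, x1, x2'), y) then 1 else 0).le
    · simp only [if_neg h, mul_zero, hzero]
      exact M.tq_isPmf.sum_mul_nonneg fun _ => (M.in1_isPmf _ _).sum_mul_nonneg fun _ =>
        (M.in2_isPmf _ _).sum_mul_nonneg fun _ => (M.in2_isPmf _ _).sum_mul_nonneg fun _ =>
        hnn _ _ _
  · refine Finset.sum_le_sum fun s1' _ => Finset.sum_le_sum fun s2' _ => ?_
    by_cases h : s1 ≠ s1' ∧ s2 ≠ s2' ∧ M.c1 s1 = M.c1 s1' ∧ M.c2 s2 = M.c2 s2'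
    · simp only [if_pos h, if_pos h.2.2.1, one_mul]
      exact (codeAvg_diff12 M.c1 M.c2 M.tq_isPmf M.in1_isPmf M.in2_isPmf hc h.1 h.2.1 h.2.2.1
        h.2.2.2 fun q x1 x1' x2 x2' => M.chn x1 x2 y *
          if M.Passes E ((q, s1', s2', w, x1', x2'), y) then 1 else 0).le
    · simp only [if_neg h, mul_zero, hzero]
      exact mul_nonneg (by split_ifs <;> simp) (M.tq_isPmf.sum_mul_nonneg fun _ =>
        (M.in1_isPmf _ _).sum_mul_nonneg fun _ => (M.in1_isPmf _ _).sum_mul_nonneg fun _ =>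
        (M.in2_isPmf _ _).sum_mul_nonneg fun _ => (M.in2_isPmf _ _).sum_mul_nonneg fun _ =>
        hnn _ _ _)
  · refine Finset.sum_le_sum fun s1' _ => Finset.sum_le_sum fun s2' _ => ?_
    by_cases h : M.c1 s1' = M.c2 s2' ∧ M.c1 s1 ≠ M.c1 s1'
    · simp only [if_pos h]
      exact (codeAvg_diff_common M.c1 M.c2 M.tq_isPmf M.in1_isPmf M.in2_isPmf hc h.1 h.2
        fun q x1 x1' x2 x2' => M.chn x1 x2 y *
          if M.Passes E ((q, s1', s2', w, x1', x2'), y) then 1 else 0).le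
    · simp only [if_neg h, mul_zero, hzero]
      exact M.tq_isPmf.sum_mul_nonneg fun _ => M.tq_isPmf.sum_mul_nonneg fun _ =>
        (M.in1_isPmf _ _).sum_mul_nonneg fun _ => (M.in1_isPmf _ _).sum_mul_nonneg fun _ =>
        (M.in2_isPmf _ _).sum_mul_nonneg fun _ => (M.in2_isPmf _ _).sum_mul_nonneg fun _ =>
        hnn _ _ _

theorem avg_error_le [Fintype U] [Nonempty S1] [Nonempty S2] {E : ℝ} (hE : 0 < E) :
    M.avg (fun a b c => ∑ r : S1 × S2 × W × Y, M.src r.1 r.2.1 r.2.2.1 *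
      (M.chn (b r.1) (c r.2.1) r.2.2.2 *
        if M.decoder E a b c r.2.2.2 r.2.2.1 = (r.1, r.2.1) then (0 : ℝ) else 1)) ≤
    (∑ z, M.joint z * if M.Passes E z then 0 else 1) + 4 / E := by
  rw [avg, codeAvg_sum]
  simp only [codeAvg_const_mul]
  refine le_trans (sum_mul_le_sum_mul (fun r => M.src_nonneg _ _ _) fun r hr =>
    M.avg_decoder_error_le E r.1 r.2.1 r.2.2.1 r.2.2.2 (M.common _ _ _ hr)) ?_
  simp only [mul_add, Finset.sum_add_distrib]
  rw [M.sum_same fun z => if M.Passes E z then 0 else 1,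
    M.sum_diff1 fun z => if M.Passes E z then 1 else 0,
    M.sum_diff2 fun z => if M.Passes E z then 1 else 0,
    M.sum_diff12 fun z => if M.Passes E z then 1 else 0,
    M.sum_diff_common fun z => if M.Passes E z then 1 else 0]
  have t0 : ∀ z : (Q × S1 × S2 × W × X1 × X2) × Y, 0 ≤ M.tq z.1.1 := fun z => M.tq_isPmf.1 _
  have i1 : ∀ z : (Q × S1 × S2 × W × X1 × X2) × Y, 0 ≤ M.in1 z.1.1 z.1.2.1 z.1.2.2.2.2.1 :=
    fun z => (M.in1_isPmf _ _).1 _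
  have i2 : ∀ z : (Q × S1 × S2 × W × X1 × X2) × Y, 0 ≤ M.in2 z.1.1 z.1.2.2.1 z.1.2.2.2.2.2 :=
    fun z => (M.in2_isPmf _ _).1 _
  have sc : ∀ z : (Q × S1 × S2 × W × X1 × X2) × Y, 0 ≤ M.src z.1.2.1 z.1.2.2.1 z.1.2.2.2.1 :=
    fun z => M.src_nonneg _ _ _
  have ch : ∀ z : (Q × S1 × S2 × W × X1 × X2) × Y,
      0 ≤ M.chn z.1.2.2.2.2.1 z.1.2.2.2.2.2 z.2 := fun z => (M.chn_isPmf _ _).1 _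
  have b1 := M.sum_passes_le view1 (fun z => M.in1 z.1.1 z.1.2.1 z.1.2.2.2.2.1) M.num1 i1
    (fun z => mul_nonneg (mul_nonneg (mul_nonneg (t0 z) (sc z)) (i2 z)) (ch z))
    (fun z => by simp only [num1, joint]; ring) hE (M.Passes E) fun z h => h.2.1
  have b2 := M.sum_passes_le view2 (fun z => M.in2 z.1.1 z.1.2.2.1 z.1.2.2.2.2.2) M.num2 i2
    (fun z => mul_nonneg (mul_nonneg (mul_nonneg (t0 z) (sc z)) (i1 z)) (ch z))
    (fun z => by simp only [num2, joint]; ring) hE (M.Passes E) fun z h => h.2.2.1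
  have b3 := M.sum_passes_le M.view3 (fun z => M.in1 z.1.1 z.1.2.1 z.1.2.2.2.2.1 *
      M.in2 z.1.1 z.1.2.2.1 z.1.2.2.2.2.2) M.num3 (fun z => mul_nonneg (i1 z) (i2 z))
    (fun z => mul_nonneg (mul_nonneg (t0 z) (sc z)) (ch z))
    (fun z => by simp only [num3, joint]; ring) hE (M.Passes E) fun z h => h.2.2.2.1
  have b4 := M.sum_passes_le view4 (fun z => M.tq z.1.1 * M.in1 z.1.1 z.1.2.1 z.1.2.2.2.2.1 *
      M.in2 z.1.1 z.1.2.2.1 z.1.2.2.2.2.2) M.num4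
    (fun z => mul_nonneg (mul_nonneg (t0 z) (i1 z)) (i2 z))
    (fun z => mul_nonneg (sc z) (ch z))
    (fun z => by simp only [num4, joint]; ring) hE (M.Passes E) fun z h => h.2.2.2.2
  have : 4 / E = 1 / E + 1 / E + 1 / E + 1 / E := by ring
  linarith

/-- The `n`-fold memoryless extension of a system. -/
def block (n : ℕ) : MacSystem (Fin n → S1) (Fin n → S2) (Fin n → W) (Fin n → Q) (Fin n → U)
    (Fin n → X1) (Fin n → X2) (Fin n → Y) where
  src s1 s2 w := ∏ i, M.src (s1 i) (s2 i) (w i)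
  tq q := ∏ i, M.tq (q i)
  in1 q s x := ∏ i, M.in1 (q i) (s i) (x i)
  in2 q s x := ∏ i, M.in2 (q i) (s i) (x i)
  chn x1 x2 y := ∏ i, M.chn (x1 i) (x2 i) (y i)
  c1 s i := M.c1 (s i)
  c2 s i := M.c2 (s i)
  src_nonneg _ _ _ := Finset.prod_nonneg fun _ _ => M.src_nonneg _ _ _
  src_sum := by
    simp_rw [fun (s1 : Fin n → S1) (s2 : Fin n → S2) =>
      sum_pi_prod fun i w => M.src (s1 i) (s2 i) w,
      fun (s1 : Fin n → S1) => sum_pi_prod fun i s2 => ∑ w, M.src (s1 i) s2 w]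
    rw [sum_pi_prod fun _ s1 => ∑ s2, ∑ w, M.src s1 s2 w]
    simp [M.src_sum]
  tq_isPmf := ⟨fun _ => Finset.prod_nonneg fun _ _ => M.tq_isPmf.1 _, by
    rw [sum_pi_prod fun _ q => M.tq q]
    simp [M.tq_isPmf.2]⟩
  in1_isPmf q s := ⟨fun _ => Finset.prod_nonneg fun _ _ => (M.in1_isPmf _ _).1 _, by
    rw [sum_pi_prod fun i x => M.in1 (q i) (s i) x]
    simp [(M.in1_isPmf _ _).2]⟩
  in2_isPmf q s := ⟨fun _ => Finset.prod_nonneg fun _ _ => (M.in2_isPmf _ _).1 _, by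
    rw [sum_pi_prod fun i x => M.in2 (q i) (s i) x]
    simp [(M.in2_isPmf _ _).2]⟩
  chn_isPmf x1 x2 := ⟨fun _ => Finset.prod_nonneg fun _ _ => (M.chn_isPmf _ _).1 _, by
    rw [sum_pi_prod fun i y => M.chn (x1 i) (x2 i) y]
    simp [(M.chn_isPmf _ _).2]⟩
  common s1 s2 w h := funext fun i => M.common _ _ (w i) <|
    (M.src_nonneg _ _ _).lt_of_ne' (Finset.prod_ne_zero_iff.1 h.ne' i (Finset.mem_univ i))

/-- Tuples of sequences as sequences of tuples. -/
def blockEquiv (n : ℕ) (Q S1 S2 W X1 X2 Y : Type) :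
    ((Fin n → Q) × (Fin n → S1) × (Fin n → S2) × (Fin n → W) × (Fin n → X1) × (Fin n → X2)) ×
      (Fin n → Y) ≃ (Fin n → (Q × S1 × S2 × W × X1 × X2) × Y) where
  toFun z i := ((z.1.1 i, z.1.2.1 i, z.1.2.2.1 i, z.1.2.2.2.1 i, z.1.2.2.2.2.1 i,
    z.1.2.2.2.2.2 i), z.2 i)
  invFun f := ((fun i => (f i).1.1, fun i => (f i).1.2.1, fun i => (f i).1.2.2.1,
    fun i => (f i).1.2.2.2.1, fun i => (f i).1.2.2.2.2.1, fun i => (f i).1.2.2.2.2.2),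
    fun i => (f i).2)
  left_inv _ := rfl
  right_inv _ := rfl

theorem block_joint (n : ℕ) (z) :
    (M.block n).joint z = ∏ i, M.joint (blockEquiv n Q S1 S2 W X1 X2 Y z i) := by
  simp only [joint, block, blockEquiv, Equiv.coe_fn_mk, Finset.prod_mul_distrib]

theorem prD_block {α β : Type} (n : ℕ)
    (K' : ((Fin n → Q) × (Fin n → S1) × (Fin n → S2) × (Fin n → W) × (Fin n → X1) ×
      (Fin n → X2)) × (Fin n → Y) → β) (K : (Q × S1 × S2 × W × X1 × X2) × Y → α)
    (h : ∀ z z', K' z = K' z' ↔ ∀ i, K (blockEquiv n Q S1 S2 W X1 X2 Y z i) =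
      K (blockEquiv n Q S1 S2 W X1 X2 Y z' i)) (z) :
    prD (M.block n).joint K' (K' z) =
      ∏ i, prD M.joint K (K (blockEquiv n Q S1 S2 W X1 X2 Y z i)) := by
  rw [← sum_pi_ite_forall]
  refine Fintype.sum_equiv (blockEquiv n Q S1 S2 W X1 X2 Y) _ _ fun z' => ?_
  simp only [h, M.block_joint]

theorem sum_block_test_le {α β : Type} {n : ℕ}
    (K' : ((Fin n → Q) × (Fin n → S1) × (Fin n → S2) × (Fin n → W) × (Fin n → X1) ×
      (Fin n → X2)) × (Fin n → Y) → β) (K : (Q × S1 × S2 × W × X1 × X2) × Y → α)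
    (h : ∀ z z', K' z = K' z' ↔ ∀ i, K (blockEquiv n Q S1 S2 W X1 X2 Y z i) =
      K (blockEquiv n Q S1 S2 W X1 X2 Y z' i))
    (a' : ((Fin n → Q) × (Fin n → S1) × (Fin n → S2) × (Fin n → W) × (Fin n → X1) ×
      (Fin n → X2)) × (Fin n → Y) → ℝ) (a : (Q × S1 × S2 × W × X1 × X2) × Y → ℝ)
    (ha : ∀ z, a' z = ∏ i, a (blockEquiv n Q S1 S2 W X1 X2 Y z i)) {E r : ℝ}
    (hr : ∑ f : Fin n → (Q × S1 × S2 × W × X1 × X2) × Y, (∏ i, M.joint (f i)) *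
      (if E * ∏ i, prD M.joint K (K (f i)) ≤ ∏ i, a (f i) then 0 else 1) ≤ r) :
    ∑ z, (M.block n).joint z *
      (if E * prD (M.block n).joint K' (K' z) ≤ a' z then 0 else 1) ≤ r := by
  refine le_trans (le_of_eq ?_) hr
  refine Fintype.sum_equiv (blockEquiv n Q S1 S2 W X1 X2 Y) _ _ fun z => ?_
  rw [M.block_joint, M.prD_block n K' K h, ha]

theorem pos_of_joint_pos {z : (Q × S1 × S2 × W × X1 × X2) × Y} (h : 0 < M.joint z) :
    0 < M.tq z.1.1 ∧ 0 < M.src z.1.2.1 z.1.2.2.1 z.1.2.2.2.1 ∧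
    0 < M.in1 z.1.1 z.1.2.1 z.1.2.2.2.2.1 ∧ 0 < M.in2 z.1.1 z.1.2.2.1 z.1.2.2.2.2.2 ∧
    0 < M.chn z.1.2.2.2.2.1 z.1.2.2.2.2.2 z.2 := by
  have h' := h.ne'
  simp only [joint, mul_ne_zero_iff] at h'
  obtain ⟨⟨⟨⟨h1, h2⟩, h3⟩, h4⟩, h5⟩ := h'
  exact ⟨(M.tq_isPmf.1 _).lt_of_ne' h1, (M.src_nonneg _ _ _).lt_of_ne' h2,
    ((M.in1_isPmf _ _).1 _).lt_of_ne' h3, ((M.in2_isPmf _ _).1 _).lt_of_ne' h4,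
    ((M.chn_isPmf _ _).1 _).lt_of_ne' h5⟩

/-- When all likelihood ratios have positive mean, the sent block passes the test with a
probability that tends to one exponentially fast. -/
theorem exists_block_not_passes_le (δ : ℝ)
    (h1 : δ < ∑ z, M.joint z * (Real.log (M.num1 z) - Real.log (prD M.joint view1 (view1 z))))
    (h2 : δ < ∑ z, M.joint z * (Real.log (M.num2 z) - Real.log (prD M.joint view2 (view2 z))))
    (h3 : δ < ∑ z, M.joint z *
      (Real.log (M.num3 z) - Real.log (prD M.joint M.view3 (M.view3 z))))
    (h4 : δ < ∑ z, M.joint z * (Real.log (M.num4 z) - Real.log (prD M.joint view4 (view4 z)))) :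
    ∃ ρ : ℝ, 0 ≤ ρ ∧ ρ < 1 ∧ ∀ n : ℕ, ∑ z, (M.block n).joint z *
      (if (M.block n).Passes (Real.exp δ ^ n) z then 0 else 1) ≤ 4 * ρ ^ n := by
  have hprD : ∀ {α : Type} (K : (Q × S1 × S2 × W × X1 × X2) × Y → α) (z), 0 < M.joint z →
      0 < prD M.joint K (K z) := fun K z hz => hz.trans_le (le_prD M.joint_nonneg K z)
  obtain ⟨ρ1, p1, l1, b1⟩ := exists_likelihood_ratio_bound M.joint_nonneg M.joint_sum M.num1
    (fun z => prD M.joint view1 (view1 z)) (fun z hz => ⟨by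
      obtain ⟨t, s, i1, i2, c⟩ := M.pos_of_joint_pos hz
      simp only [num1]; positivity, hprD _ z hz⟩) δ h1
  obtain ⟨ρ2, p2, l2, b2⟩ := exists_likelihood_ratio_bound M.joint_nonneg M.joint_sum M.num2
    (fun z => prD M.joint view2 (view2 z)) (fun z hz => ⟨by
      obtain ⟨t, s, i1, i2, c⟩ := M.pos_of_joint_pos hz
      simp only [num2]; positivity, hprD _ z hz⟩) δ h2
  obtain ⟨ρ3, p3, l3, b3⟩ := exists_likelihood_ratio_bound M.joint_nonneg M.joint_sum M.num3
    (fun z => prD M.joint M.view3 (M.view3 z)) (fun z hz => ⟨by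
      obtain ⟨t, s, i1, i2, c⟩ := M.pos_of_joint_pos hz
      simp only [num3]; positivity, hprD _ z hz⟩) δ h3
  obtain ⟨ρ4, p4, l4, b4⟩ := exists_likelihood_ratio_bound M.joint_nonneg M.joint_sum M.num4
    (fun z => prD M.joint view4 (view4 z)) (fun z hz => ⟨by
      obtain ⟨t, s, i1, i2, c⟩ := M.pos_of_joint_pos hz
      simp only [num4]; positivity, hprD _ z hz⟩) δ h4
  set ρ := max (max ρ1 ρ2) (max ρ3 ρ4) with hρ
  refine ⟨ρ, by simp [hρ, p1], by simp [hρ, l1, l2, l3, l4], fun n => ?_⟩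
  have e1 := (M.sum_block_test_le (n := n) view1 view1 (by
    intro z z'
    simp only [view1, blockEquiv, Equiv.coe_fn_mk, Prod.mk.injEq, funext_iff, forall_and])
    (M.block n).num1 M.num1 (by
      intro z
      simp only [num1, block, blockEquiv, Equiv.coe_fn_mk, Finset.prod_mul_distrib])
    (b1 n)).trans (pow_le_pow_left₀ p1 (show ρ1 ≤ ρ by simp [hρ]) n)
  have e2 := (M.sum_block_test_le (n := n) view2 view2 (by
    intro z z'
    simp only [view2, blockEquiv, Equiv.coe_fn_mk, Prod.mk.injEq, funext_iff, forall_and])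
    (M.block n).num2 M.num2 (by
      intro z
      simp only [num2, block, blockEquiv, Equiv.coe_fn_mk, Finset.prod_mul_distrib])
    (b2 n)).trans (pow_le_pow_left₀ p2 (show ρ2 ≤ ρ by simp [hρ]) n)
  have e3 := (M.sum_block_test_le (n := n) (M.block n).view3 M.view3 (by
    intro z z'
    simp only [view3, block, blockEquiv, Equiv.coe_fn_mk, Prod.mk.injEq, funext_iff, forall_and])
    (M.block n).num3 M.num3 (by
      intro z
      simp only [num3, block, blockEquiv, Equiv.coe_fn_mk, Finset.prod_mul_distrib])
    (b3 n)).trans (pow_le_pow_left₀ p3 (show ρ3 ≤ ρ by simp [hρ]) n)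
  have e4 := (M.sum_block_test_le (n := n) view4 view4 (by
    intro z z'
    simp only [view4, blockEquiv, Equiv.coe_fn_mk, Prod.mk.injEq, funext_iff, forall_and])
    (M.block n).num4 M.num4 (by
      intro z
      simp only [num4, block, blockEquiv, Equiv.coe_fn_mk, Finset.prod_mul_distrib])
    (b4 n)).trans (pow_le_pow_left₀ p4 (show ρ4 ≤ ρ by simp [hρ]) n)
  refine le_trans (sum_mul_le_sum_mul (M.block n).joint_nonneg (g := fun z =>
    (if Real.exp δ ^ n * prD (M.block n).joint view1 (view1 z) ≤ (M.block n).num1 z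
      then 0 else 1) +
    (if Real.exp δ ^ n * prD (M.block n).joint view2 (view2 z) ≤ (M.block n).num2 z
      then 0 else 1) +
    (if Real.exp δ ^ n * prD (M.block n).joint (M.block n).view3 ((M.block n).view3 z) ≤
      (M.block n).num3 z then 0 else 1) +
    (if Real.exp δ ^ n * prD (M.block n).joint view4 (view4 z) ≤ (M.block n).num4 z
      then 0 else 1)) fun z hz => ?_) ?_
  · have hc := (M.block n).common _ _ _ ((M.block n).pos_of_joint_pos hz).2.1
    simp only [Passes, hc, true_and]
    split_ifs <;> first | (norm_num; done) | tauto
  · simp only [mul_add, Finset.sum_add_distrib]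
    linarith

/-- The joint pmf of the sources and the side information. -/
def source (r : S1 × S2 × W) : ℝ :=
  M.src r.1 r.2.1 r.2.2

theorem sum_joint_mul (G : Q × S1 × S2 × W × X1 × X2 → ℝ) :
    ∑ z, M.joint z * G z.1 = ∑ q, M.tq q * ∑ s1, ∑ s2, ∑ w, M.src s1 s2 w *
      ∑ x1, M.in1 q s1 x1 * ∑ x2, M.in2 q s2 x2 * G (q, s1, s2, w, x1, x2) := by
  simp only [Finset.mul_sum, Fintype.sum_prod_type, joint]
  refine Finset.sum_congr rfl fun q _ => Finset.sum_congr rfl fun s1 _ => Finset.sum_congr rfl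
    fun s2 _ => Finset.sum_congr rfl fun w _ => Finset.sum_congr rfl fun x1 _ =>
    Finset.sum_congr rfl fun x2 _ => ?_
  rw [← Finset.sum_mul, ← Finset.mul_sum, (M.chn_isPmf _ _).2]
  ring

theorem sum_source_mul (G : S1 × S2 × W → ℝ) :
    ∑ r, M.source r * G r = ∑ z, M.joint z * G (z.1.2.1, z.1.2.2.1, z.1.2.2.2.1) := by
  rw [M.sum_joint_mul fun v => G (v.2.1, v.2.2.1, v.2.2.2.1)]
  simp only [← Finset.sum_mul, (M.in1_isPmf _ _).2, (M.in2_isPmf _ _).2, M.tq_isPmf.2, one_mul,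
    Fintype.sum_prod_type, source]

/-- An information gap is the mean of a log-likelihood ratio. -/
theorem condMutInf_sub_condEnt {α α' β γ : Type} [Fintype α] [Fintype α'] [Fintype β]
    [Fintype γ] (A : Q × S1 × S2 × W × X1 × X2 → α) (C : Q × S1 × S2 × W × X1 × X2 → γ)
    (T : S1 × S2 × W → α') (B : S1 × S2 × W → β)
    (num : (Q × S1 × S2 × W × X1 × X2) × Y → ℝ)
    (hdet : ∀ v v', A v = A v' → C v = C v' →
      v.2.2.2.2.1 = v'.2.2.2.2.1 ∧ v.2.2.2.2.2 = v'.2.2.2.2.2)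
    (hinj : Function.Injective fun r => (T r, B r))
    (hnum : ∀ z, 0 < M.joint z → num z * prD M.source B (B (z.1.2.1, z.1.2.2.1, z.1.2.2.2.1)) =
      M.chn z.1.2.2.2.2.1 z.1.2.2.2.2.2 z.2 * prD M.joint (fun z => C z.1) (C z.1) *
        M.src z.1.2.1 z.1.2.2.1 z.1.2.2.2.1) :
    condMutInf M.joint (fun z => A z.1) (fun z => z.2) (fun z => C z.1) -
      condEnt M.source T B = ∑ z, M.joint z *
        (Real.log (num z) - Real.log (prD M.joint (fun z => (z.2, C z.1)) (z.2, C z.1))) := by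
  have hsrc : ∀ r, 0 ≤ M.source r := fun r => M.src_nonneg _ _ _
  have hTB : ∀ r, prD M.source (fun r => (T r, B r)) (T r, B r) = M.source r := fun r => by
    have : ∀ r', (T r', B r') = (T r, B r) ↔ r' = r := fun r' => hinj.eq_iff
    simp [prD, this]
  rw [condMutInf_eq_of_kernel M.joint (fun v => M.tq v.1 * M.src v.2.1 v.2.2.1 v.2.2.2.1 *
      M.in1 v.1 v.2.1 v.2.2.2.2.1 * M.in2 v.1 v.2.2.1 v.2.2.2.2.2)
    (fun v => M.chn v.2.2.2.2.1 v.2.2.2.2.2) (fun _ _ => rfl) (fun _ => (M.chn_isPmf _ _).2)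
    (fun z hz => (M.pos_of_joint_pos ((M.joint_nonneg z).lt_of_ne' hz)).2.2.2.2) M.joint_nonneg
    A C (fun v v' hA hC => by rw [(hdet v v' hA hC).1, (hdet v v' hA hC).2])]
  rw [condEnt, ent_eq_neg_sum, ent_eq_neg_sum, ent_eq_neg_sum,
    M.sum_source_mul fun r => Real.log (prD M.source (fun r => (T r, B r)) (T r, B r)),
    M.sum_source_mul fun r => Real.log (prD M.source B (B r))]
  simp only [hTB, ← sub_eq_add_neg, sub_neg_eq_add, neg_add_eq_sub, ← Finset.sum_sub_distrib,
    ← mul_sub]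
  refine Finset.sum_congr rfl fun z _ => ?_
  rcases (M.joint_nonneg z).eq_or_lt with h0 | h0
  · rw [← h0, zero_mul, zero_mul]
  obtain ⟨h1, h2, h3, h4, h5⟩ := M.pos_of_joint_pos h0
  have hC : 0 < prD M.joint (fun z => C z.1) (C z.1) :=
    h0.trans_le (le_prD M.joint_nonneg (fun z => C z.1) z)
  have hB : 0 < prD M.source B (B (z.1.2.1, z.1.2.2.1, z.1.2.2.2.1)) :=
    h2.trans_le (le_prD hsrc B (z.1.2.1, z.1.2.2.1, z.1.2.2.2.1))
  have hn := hnum z h0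
  have hn0 : num z ≠ 0 := by
    intro h
    rw [h, zero_mul] at hn
    exact (mul_pos (mul_pos h5 hC) h2).ne hn
  have hlog := congrArg Real.log hn
  rw [Real.log_mul hn0 hB.ne', Real.log_mul (mul_pos h5 hC).ne' h2.ne',
    Real.log_mul h5.ne' hC.ne'] at hlog
  simp only [source] at hlog ⊢
  linear_combination (-M.joint z) * hlog

theorem prD_joint_eq_sum {α : Type} (C : Q × S1 × S2 × W × X1 × X2 → α) (c : α) :
    prD M.joint (fun z => C z.1) c = ∑ q, M.tq q * ∑ s1, ∑ s2, ∑ w, M.src s1 s2 w *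
      ∑ x1, M.in1 q s1 x1 * ∑ x2, M.in2 q s2 x2 *
        if C (q, s1, s2, w, x1, x2) = c then 1 else 0 := by
  rw [← M.sum_joint_mul fun v => if C v = c then 1 else 0]
  simp [prD]

theorem gap1 : condMutInf M.joint (fun z => z.1.2.2.2.2.1) (fun z => z.2)
      (fun z => (z.1.2.2.2.2.2, z.1.2.2.1, z.1.2.2.2.1, z.1.1)) -
      condEnt M.source (fun r => r.1) (fun r => (r.2.1, r.2.2)) =
    ∑ z, M.joint z * (Real.log (M.num1 z) - Real.log (prD M.joint view1 (view1 z))) := by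
  refine M.condMutInf_sub_condEnt (fun v => v.2.2.2.2.1)
    (fun v => (v.2.2.2.2.2, v.2.2.1, v.2.2.2.1, v.1)) (fun r => r.1) (fun r => (r.2.1, r.2.2))
    M.num1 ?_ ?_ ?_
  · intro v v' h1 h2
    simp only [Prod.mk.injEq] at h2
    exact ⟨h1, h2.1⟩
  · rintro ⟨a, b, c⟩ ⟨a', b', c'⟩ h
    simpa using h
  · rintro ⟨⟨q, s1, s2, w, x1, x2⟩, y⟩ -
    have e1 : prD M.joint (fun z => (z.1.2.2.2.2.2, z.1.2.2.1, z.1.2.2.2.1, z.1.1))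
        (x2, s2, w, q) = M.tq q * ((∑ s1', M.src s1' s2 w) * M.in2 q s2 x2) := by
      rw [M.prD_joint_eq_sum fun v => (v.2.2.2.2.2, v.2.2.1, v.2.2.2.1, v.1)]
      simp only [Prod.mk.injEq, ite_and]
      simp [← Finset.sum_mul, (M.in1_isPmf _ _).2]
    have e2 : prD M.source (fun r => (r.2.1, r.2.2)) (s2, w) = ∑ s1', M.src s1' s2 w := by
      simp only [prD, Fintype.sum_prod_type, Prod.mk.injEq, ite_and, source]
      simp
    simp only [e1, e2, num1]
    ring

theorem gap2 : condMutInf M.joint (fun z => z.1.2.2.2.2.2) (fun z => z.2)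
      (fun z => (z.1.2.2.2.2.1, z.1.2.1, z.1.2.2.2.1, z.1.1)) -
      condEnt M.source (fun r => r.2.1) (fun r => (r.1, r.2.2)) =
    ∑ z, M.joint z * (Real.log (M.num2 z) - Real.log (prD M.joint view2 (view2 z))) := by
  refine M.condMutInf_sub_condEnt (fun v => v.2.2.2.2.2)
    (fun v => (v.2.2.2.2.1, v.2.1, v.2.2.2.1, v.1)) (fun r => r.2.1) (fun r => (r.1, r.2.2))
    M.num2 ?_ ?_ ?_
  · intro v v' h1 h2
    simp only [Prod.mk.injEq] at h2
    exact ⟨h2.1, h1⟩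
  · rintro ⟨a, b, c⟩ ⟨a', b', c'⟩ h
    simp only [Prod.mk.injEq] at h
    simp [h]
  · rintro ⟨⟨q, s1, s2, w, x1, x2⟩, y⟩ -
    have e1 : prD M.joint (fun z => (z.1.2.2.2.2.1, z.1.2.1, z.1.2.2.2.1, z.1.1))
        (x1, s1, w, q) = M.tq q * ((∑ s2', M.src s1 s2' w) * M.in1 q s1 x1) := by
      rw [M.prD_joint_eq_sum fun v => (v.2.2.2.2.1, v.2.1, v.2.2.2.1, v.1)]
      simp only [Prod.mk.injEq, ite_and]
      simp [← Finset.sum_mul, (M.in2_isPmf _ _).2]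
    have e2 : prD M.source (fun r => (r.1, r.2.2)) (s1, w) = ∑ s2', M.src s1 s2' w := by
      simp only [prD, Fintype.sum_prod_type, Prod.mk.injEq, ite_and, source]
      simp
    simp only [e1, e2, num2]
    ring

theorem gap3 [Fintype U] : condMutInf M.joint (fun z => (z.1.2.2.2.2.1, z.1.2.2.2.2.2))
      (fun z => z.2) (fun z => (M.c1 z.1.2.1, z.1.2.2.2.1, z.1.1)) -
      condEnt M.source (fun r => (r.1, r.2.1)) (fun r => (M.c1 r.1, r.2.2)) =
    ∑ z, M.joint z * (Real.log (M.num3 z) - Real.log (prD M.joint M.view3 (M.view3 z))) := by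
  refine M.condMutInf_sub_condEnt (fun v => (v.2.2.2.2.1, v.2.2.2.2.2))
    (fun v => (M.c1 v.2.1, v.2.2.2.1, v.1)) (fun r => (r.1, r.2.1)) (fun r => (M.c1 r.1, r.2.2))
    M.num3 ?_ ?_ ?_
  · intro v v' h1 h2
    exact ⟨congrArg Prod.fst h1, congrArg Prod.snd h1⟩
  · rintro ⟨a, b, c⟩ ⟨a', b', c'⟩ h
    simp only [Prod.mk.injEq] at h
    simp [h]
  · rintro ⟨⟨q, s1, s2, w, x1, x2⟩, y⟩ -
    have e1 : prD M.joint (fun z => (M.c1 z.1.2.1, z.1.2.2.2.1, z.1.1))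
        (M.c1 s1, w, q) = M.tq q * ∑ s1', if M.c1 s1' = M.c1 s1 then ∑ s2', M.src s1' s2' w
          else 0 := by
      rw [M.prD_joint_eq_sum fun v => (M.c1 v.2.1, v.2.2.2.1, v.1)]
      simp only [Prod.mk.injEq, ite_and]
      simp only [mul_ite, mul_one, mul_zero, Finset.sum_ite_irrel, Finset.sum_const_zero,
        Finset.sum_ite_eq', Finset.mem_univ, if_true, (M.in2_isPmf _ _).2, (M.in1_isPmf _ _).2]
      have : ∀ q', (∑ s1', if M.c1 s1' = M.c1 s1 then if q' = q then ∑ s2', M.src s1' s2' w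
          else 0 else 0) = if q' = q then ∑ s1', if M.c1 s1' = M.c1 s1 then
          ∑ s2', M.src s1' s2' w else 0 else 0 := fun q' => by split_ifs <;> simp
      simp [this]
    have e2 : prD M.source (fun r => (M.c1 r.1, r.2.2)) (M.c1 s1, w) =
        ∑ s1', if M.c1 s1' = M.c1 s1 then ∑ s2', M.src s1' s2' w else 0 := by
      simp only [prD, Fintype.sum_prod_type, Prod.mk.injEq, ite_and, source]
      simp
    simp only [e1, e2, num3]
    ring

theorem gap4 : condMutInf M.joint (fun z => (z.1.2.2.2.2.1, z.1.2.2.2.2.2))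
      (fun z => z.2) (fun z => z.1.2.2.2.1) -
      condEnt M.source (fun r => (r.1, r.2.1)) (fun r => r.2.2) =
    ∑ z, M.joint z * (Real.log (M.num4 z) - Real.log (prD M.joint view4 (view4 z))) := by
  refine M.condMutInf_sub_condEnt (fun v => (v.2.2.2.2.1, v.2.2.2.2.2))
    (fun v => v.2.2.2.1) (fun r => (r.1, r.2.1)) (fun r => r.2.2) M.num4 ?_ ?_ ?_
  · intro v v' h1 h2
    exact ⟨congrArg Prod.fst h1, congrArg Prod.snd h1⟩
  · rintro ⟨a, b, c⟩ ⟨a', b', c'⟩ h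
    simp only [Prod.mk.injEq] at h
    simp [h]
  · rintro ⟨⟨q, s1, s2, w, x1, x2⟩, y⟩ -
    have e1 : prD M.joint (fun z => z.1.2.2.2.1) w = ∑ s1', ∑ s2', M.src s1' s2' w := by
      rw [M.prD_joint_eq_sum fun v => v.2.2.2.1]
      simp [← Finset.sum_mul, (M.in2_isPmf _ _).2, (M.in1_isPmf _ _).2, M.tq_isPmf.2]
    have e2 : prD M.source (fun r => r.2.2) w = ∑ s1', ∑ s2', M.src s1' s2' w := by
      simp only [prD, Fintype.sum_prod_type, source]
      simp
    simp only [e1, e2, num4]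
    ring

end MacSystem

theorem sum_pi_mul_comp {Ω α : Type} [Fintype Ω] [Fintype α] {n : ℕ} (μ : Fin n → Ω → ℝ)
    (K : Ω → α) (G : (Fin n → α) → ℝ) :
    ∑ z : Fin n → Ω, (∏ i, μ i (z i)) * G (fun i => K (z i)) =
      ∑ a : Fin n → α, (∏ i, prD (μ i) K (a i)) * G a := by
  simp only [prD]
  simp_rw [fun a : Fin n → α => (sum_pi_prod fun i ω => if K ω = a i then μ i ω else 0).symm,
    Finset.sum_mul]
  rw [Finset.sum_comm]
  refine Finset.sum_congr rfl fun z _ => ?_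
  rw [Finset.sum_eq_single (fun i => K (z i))]
  · simp
  · intro a _ ha
    obtain ⟨i, hi⟩ := Function.ne_iff.1 ha
    rw [Finset.prod_eq_zero (Finset.mem_univ i) (if_neg (Ne.symm hi)), zero_mul]
  · simp

theorem IsPmf.prD {Ω α : Type} [Fintype Ω] [Fintype α] {μ : Ω → ℝ} (hμ : IsPmf μ)
    (K : Ω → α) : IsPmf (prD μ K) := by
  refine ⟨prD_nonneg hμ.1 K, ?_⟩
  have := sum_prD_mul μ K fun _ => 1
  simpa [hμ.2] using this

namespace MacSystem

section Coding

variable {S1 S2 W Q U X1 X2 Y : Type} [Fintype S1] [Fintype S2] [Fintype W]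
    [Fintype Q] [Fintype U] [Fintype X1] [Fintype X2] [Fintype Y]
    (M : MacSystem S1 S2 W Q U X1 X2 Y)

/-- The error probability of a code with encoders `b`, `c` and decoder `g`. -/
def errorProb (b : S1 → X1) (c : S2 → X2) (g : Y → W → S1 × S2) : ℝ :=
  ∑ r : S1 × S2 × W × Y, M.src r.1 r.2.1 r.2.2.1 *
    (M.chn (b r.1) (c r.2.1) r.2.2.2 * if g r.2.2.2 r.2.2.1 = (r.1, r.2.1) then (0 : ℝ) else 1)

theorem exists_avg_errorProb_le [Nonempty S1] [Nonempty S2]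
    (h1 : condEnt M.source (fun r => r.1) (fun r => (r.2.1, r.2.2)) <
      condMutInf M.joint (fun z => z.1.2.2.2.2.1) (fun z => z.2)
        (fun z => (z.1.2.2.2.2.2, z.1.2.2.1, z.1.2.2.2.1, z.1.1)))
    (h2 : condEnt M.source (fun r => r.2.1) (fun r => (r.1, r.2.2)) <
      condMutInf M.joint (fun z => z.1.2.2.2.2.2) (fun z => z.2)
        (fun z => (z.1.2.2.2.2.1, z.1.2.1, z.1.2.2.2.1, z.1.1)))
    (h3 : condEnt M.source (fun r => (r.1, r.2.1)) (fun r => (M.c1 r.1, r.2.2)) <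
      condMutInf M.joint (fun z => (z.1.2.2.2.2.1, z.1.2.2.2.2.2)) (fun z => z.2)
        (fun z => (M.c1 z.1.2.1, z.1.2.2.2.1, z.1.1)))
    (h4 : condEnt M.source (fun r => (r.1, r.2.1)) (fun r => r.2.2) <
      condMutInf M.joint (fun z => (z.1.2.2.2.2.1, z.1.2.2.2.2.2)) (fun z => z.2)
        (fun z => z.1.2.2.2.1)) :
    ∃ (E u : ℕ → ℝ), Filter.Tendsto u Filter.atTop (nhds 0) ∧
      ∀ n, (M.block n).avg (fun a b c => (M.block n).errorProb b c
        ((M.block n).decoder (E n) a b c)) ≤ u n := by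
  rw [← sub_pos] at h1 h2 h3 h4
  rw [M.gap1] at h1
  rw [M.gap2] at h2
  rw [M.gap3] at h3
  rw [M.gap4] at h4
  obtain ⟨δ, hδ, hδ'⟩ := exists_between (lt_min (lt_min h1 h2) (lt_min h3 h4))
  obtain ⟨⟨k1, k2⟩, k3, k4⟩ :
      (_ ∧ _) ∧ _ ∧ _ := by simpa only [lt_min_iff] using hδ'
  obtain ⟨ρ, hρ0, hρ1, hρ⟩ := M.exists_block_not_passes_le δ k1 k2 k3 k4
  refine ⟨fun n => Real.exp δ ^ n, fun n => 4 * ρ ^ n + 4 / Real.exp δ ^ n, ?_, fun n => ?_⟩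
  · have t1 := (tendsto_pow_atTop_nhds_zero_of_lt_one hρ0 hρ1).const_mul 4
    have t2 := (tendsto_pow_atTop_atTop_of_one_lt (Real.one_lt_exp_iff.2 hδ)).const_div_atTop 4
    simpa using t1.add t2
  · have := (M.block n).avg_error_le (E := Real.exp δ ^ n) (by positivity)
    exact this.trans (by linarith [hρ n])

end Coding

section Receiver

variable {S1 S2 W1 W2 X1 X2 Y1 Y2 W Y : Type} [Fintype S1] [Fintype S2] [Fintype W1]
  [Fintype W2] [Fintype X1] [Fintype X2] [Fintype Y1] [Fintype Y2] [Fintype W] [Fintype Y]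
  {pS : S1 × S2 × W1 × W2 → ℝ} (hpS : IsPmf pS)
  {chan : X1 → X2 → Y1 × Y2 → ℝ} (hchan : ∀ x1 x2, IsPmf (chan x1 x2))
  {nq nu : ℕ} {pq : Fin nq → ℝ} {px1 : Fin nq → S1 → X1 → ℝ} {px2 : Fin nq → S2 → X2 → ℝ}
  {u1 : S1 → Fin nu} {u2 : S2 → Fin nu} (hpq : IsPmf pq) (hpx1 : ∀ q s1, IsPmf (px1 q s1))
  (hpx2 : ∀ q s2, IsPmf (px2 q s2)) (hu : ∀ r, 0 < pS r → u1 r.1 = u2 r.2.1)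
  (kw : W1 × W2 → W) (ky : Y1 × Y2 → Y)

/-- The system seen by a receiver with side information `kw (w1, w2)` and output
`ky (y1, y2)`. -/
def receiver : MacSystem S1 S2 W (Fin nq) (Fin nu) X1 X2 Y where
  src s1 s2 w := prD pS (fun r => (r.1, r.2.1, kw r.2.2)) (s1, s2, w)
  tq := pq
  in1 := px1
  in2 := px2
  chn x1 x2 := prD (chan x1 x2) ky
  c1 := u1
  c2 := u2
  src_nonneg _ _ _ := prD_nonneg hpS.1 _ _
  src_sum := by
    have := (hpS.prD fun r => (r.1, r.2.1, kw r.2.2)).2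
    simpa only [Fintype.sum_prod_type] using this
  tq_isPmf := hpq
  in1_isPmf := hpx1
  in2_isPmf := hpx2
  chn_isPmf x1 x2 := (hchan x1 x2).prD ky
  common s1 s2 w h := by
    obtain ⟨r, -, hr⟩ := Finset.exists_ne_zero_of_sum_ne_zero h.ne'
    have hr' : (r.1, r.2.1, kw r.2.2) = (s1, s2, w) ∧ pS r ≠ 0 := by
      split_ifs at hr with h0
      · exact ⟨h0, hr⟩
      · exact absurd rfl hr
    obtain ⟨e1, e2, -⟩ : r.1 = s1 ∧ r.2.1 = s2 ∧ kw r.2.2 = w := by simpa using hr'.1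
    rw [← e1, ← e2]
    exact hu r ((hpS.1 r).lt_of_ne' hr'.2)

theorem prD_cmacJointMeasure :
    prD (cmacJointMeasure nq pq pS px1 px2 chan)
      (fun z => ((z.1, z.2.1.1, z.2.1.2.1, kw z.2.1.2.2, z.2.2.1, z.2.2.2.1), ky z.2.2.2.2)) =
    (receiver hpS hchan hpq hpx1 hpx2 hu kw ky).joint := by
  funext z
  obtain ⟨⟨q, s1, s2, w, x1, x2⟩, y⟩ := z
  have e1 : prD pS (fun r => (r.1, r.2.1, kw r.2.2)) (s1, s2, w) =
      ∑ v : W1 × W2, if kw v = w then pS (s1, s2, v) else 0 := by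
    have : prD pS (fun r => (r.1, r.2.1, kw r.2.2)) (s1, s2, w) =
        ∑ s1', ∑ s2', ∑ v : W1 × W2, if s1' = s1 then if s2' = s2 then if kw v = w then
          pS (s1', s2', v) else 0 else 0 else 0 := by
      simp only [prD, Fintype.sum_prod_type (α₁ := S1), Fintype.sum_prod_type (α₁ := S2),
        Prod.mk.injEq, ite_and]
    rw [this]
    simp only [Finset.sum_ite_irrel, Finset.sum_const_zero, Finset.sum_ite_eq', Finset.mem_univ,
      if_true]
  have e2 : prD (cmacJointMeasure nq pq pS px1 px2 chan)
      (fun z => ((z.1, z.2.1.1, z.2.1.2.1, kw z.2.1.2.2, z.2.2.1, z.2.2.2.1), ky z.2.2.2.2))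
      ((q, s1, s2, w, x1, x2), y) = ∑ v : W1 × W2, ∑ t : Y1 × Y2, if kw v = w then if ky t = y then
        pq q * pS (s1, s2, v) * px1 q s1 x1 * px2 q s2 x2 * chan x1 x2 t else 0 else 0 := by
    have : prD (cmacJointMeasure nq pq pS px1 px2 chan)
        (fun z => ((z.1, z.2.1.1, z.2.1.2.1, kw z.2.1.2.2, z.2.2.1, z.2.2.2.1), ky z.2.2.2.2))
        ((q, s1, s2, w, x1, x2), y) = ∑ q', ∑ s1', ∑ s2', ∑ v : W1 × W2, ∑ x1', ∑ x2',
        ∑ t : Y1 × Y2, if q' = q then if s1' = s1 then if s2' = s2 then if kw v = w then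
          if x1' = x1 then if x2' = x2 then if ky t = y then
            pq q' * pS (s1', s2', v) * px1 q' s1' x1' * px2 q' s2' x2' * chan x1' x2' t
          else 0 else 0 else 0 else 0 else 0 else 0 else 0 := by
      simp only [prD, Fintype.sum_prod_type (α₁ := S1), Fintype.sum_prod_type (α₁ := S2),
        Fintype.sum_prod_type (α₁ := Fin nq), Fintype.sum_prod_type (α₁ := X1),
        Fintype.sum_prod_type (α₁ := X2), Fintype.sum_prod_type (α₁ := S1 × S2 × W1 × W2),
        Prod.mk.injEq, ite_and, cmacJointMeasure]
    rw [this]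
    simp only [Finset.sum_ite_irrel, Finset.sum_const_zero, Finset.sum_ite_eq', Finset.mem_univ,
      if_true]
  rw [e2]
  simp only [joint, receiver, e1]
  rw [prD]
  simp only [Finset.mul_sum, Finset.sum_mul]
  rw [Finset.sum_comm]
  refine Finset.sum_congr rfl fun t _ => Finset.sum_congr rfl fun v _ => ?_
  split_ifs <;> ring

theorem exists_avg_errorProb_receiver_le [Nonempty S1] [Nonempty S2]
    (h1 : condEnt pS (fun s => s.1) (fun s => (s.2.1, kw s.2.2)) <
      condMutInf (cmacJointMeasure nq pq pS px1 px2 chan)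
        (fun z => z.2.2.1) (fun z => ky z.2.2.2.2)
        (fun z => (z.2.2.2.1, z.2.1.2.1, kw z.2.1.2.2, z.1)))
    (h2 : condEnt pS (fun s => s.2.1) (fun s => (s.1, kw s.2.2)) <
      condMutInf (cmacJointMeasure nq pq pS px1 px2 chan)
        (fun z => z.2.2.2.1) (fun z => ky z.2.2.2.2)
        (fun z => (z.2.2.1, z.2.1.1, kw z.2.1.2.2, z.1)))
    (h3 : condEnt pS (fun s => (s.1, s.2.1)) (fun s => (u1 s.1, kw s.2.2)) <
      condMutInf (cmacJointMeasure nq pq pS px1 px2 chan)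
        (fun z => (z.2.2.1, z.2.2.2.1)) (fun z => ky z.2.2.2.2)
        (fun z => (u1 z.2.1.1, kw z.2.1.2.2, z.1)))
    (h4 : condEnt pS (fun s => (s.1, s.2.1)) (fun s => kw s.2.2) <
      condMutInf (cmacJointMeasure nq pq pS px1 px2 chan)
        (fun z => (z.2.2.1, z.2.2.2.1)) (fun z => ky z.2.2.2.2)
        (fun z => kw z.2.1.2.2)) :
    ∃ (E u : ℕ → ℝ), Filter.Tendsto u Filter.atTop (nhds 0) ∧
      ∀ n, ((receiver hpS hchan hpq hpx1 hpx2 hu kw ky).block n).avg (fun a b c =>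
        ((receiver hpS hchan hpq hpx1 hpx2 hu kw ky).block n).errorProb b c
        (((receiver hpS hchan hpq hpx1 hpx2 hu kw ky).block n).decoder (E n) a b c)) ≤ u n := by
  set M := receiver hpS hchan hpq hpx1 hpx2 hu kw ky with hM
  have hJ : prD (cmacJointMeasure nq pq pS px1 px2 chan) (fun z => ((z.1, z.2.1.1, z.2.1.2.1,
      kw z.2.1.2.2, z.2.2.1, z.2.2.2.1), ky z.2.2.2.2)) = M.joint :=
    prD_cmacJointMeasure hpS hchan hpq hpx1 hpx2 hu kw ky
  have hS : prD pS (fun r => (r.1, r.2.1, kw r.2.2)) = M.source := rfl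
  refine M.exists_avg_errorProb_le ?_ ?_ ?_ ?_
  · rw [← hJ, ← hS, ← condEnt_comp, ← condMutInf_comp]
    exact h1
  · rw [← hJ, ← hS, ← condEnt_comp, ← condMutInf_comp]
    exact h2
  · rw [← hJ, ← hS, ← condEnt_comp, ← condMutInf_comp]
    exact h3
  · rw [← hJ, ← hS, ← condEnt_comp, ← condMutInf_comp]
    exact h4

theorem errorProb_block_receiver {n : ℕ} (f1 : (Fin n → S1) → Fin n → X1)
    (f2 : (Fin n → S2) → Fin n → X2)
    (g : (Fin n → Y) → (Fin n → W) → (Fin n → S1) × (Fin n → S2)) :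
    ((receiver hpS hchan hpq hpx1 hpx2 hu kw ky).block n).errorProb f1 f2 g =
      ∑ sb : Fin n → S1 × S2 × W1 × W2, ∑ yb : Fin n → Y1 × Y2,
        ((∏ i, pS (sb i)) *
          ∏ j, chan (f1 (fun i => (sb i).1) j) (f2 (fun i => (sb i).2.1) j) (yb j)) *
        (if g (fun j => ky (yb j)) (fun i => kw (sb i).2.2)
          = (fun i => (sb i).1, fun i => (sb i).2.1) then 0 else 1) := by
  have hy : ∀ sb : Fin n → S1 × S2 × W1 × W2, _ := fun sb =>
    sum_pi_mul_comp (fun j => chan (f1 (fun i => (sb i).1) j) (f2 (fun i => (sb i).2.1) j)) ky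
      fun y => if g y (fun i => kw (sb i).2.2)
        = (fun i => (sb i).1, fun i => (sb i).2.1) then (0 : ℝ) else 1
  simp only [mul_assoc, ← Finset.mul_sum]
  simp_rw [hy]
  rw [sum_pi_mul_comp (fun _ => pS) (fun r => (r.1, r.2.1, kw r.2.2)) fun s =>
    ∑ y : Fin n → Y, (∏ j, prD (chan (f1 (fun i => (s i).1) j) (f2 (fun i => (s i).2.1) j)) ky
      (y j)) * if g y (fun i => (s i).2.2) = (fun i => (s i).1, fun i => (s i).2.1) then (0 : ℝ)
        else 1]
  simp only [errorProb, Finset.mul_sum]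
  rw [← Fintype.sum_prod_type']
  refine Fintype.sum_equiv
    ⟨fun r => (fun i => (r.1 i, r.2.1 i, r.2.2.1 i), r.2.2.2),
     fun r => (fun i => (r.1 i).1, fun i => (r.1 i).2.1, fun i => (r.1 i).2.2, r.2),
     fun _ => rfl, fun _ => rfl⟩ _ _ fun r => ?_
  simp only [Equiv.coe_fn_mk, receiver, block]
  congr 2
  congr

/-- Union bound over the two receivers. -/
theorem cmacErr_le_errorProb_add {n : ℕ} (f1 : (Fin n → S1) → Fin n → X1)
    (f2 : (Fin n → S2) → Fin n → X2)
    (g1 : (Fin n → Y1) → (Fin n → W1) → (Fin n → S1) × (Fin n → S2))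
    (g2 : (Fin n → Y2) → (Fin n → W2) → (Fin n → S1) × (Fin n → S2)) :
    cmacErr pS chan n n f1 f2 g1 g2 ≤
      ((receiver hpS hchan hpq hpx1 hpx2 hu Prod.fst Prod.fst).block n).errorProb f1 f2 g1 +
      ((receiver hpS hchan hpq hpx1 hpx2 hu Prod.snd Prod.snd).block n).errorProb f1 f2 g2 := by
  rw [errorProb_block_receiver, errorProb_block_receiver, cmacErr]
  simp only [← Finset.sum_add_distrib, ← mul_add]
  refine Finset.sum_le_sum fun sb _ => Finset.sum_le_sum fun yb _ =>
    mul_le_mul_of_nonneg_left ?_ (mul_nonneg (Finset.prod_nonneg fun i _ => hpS.1 _)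
      (Finset.prod_nonneg fun j _ => (hchan _ _).1 _))
  split_ifs <;> first | tauto | norm_num

end Receiver

end MacSystem

/-- For arbitrarily correlated sources `(S1, S2)` with side information
`W1`, `W2` at the two receivers of a DM compound MAC `p(y1,y2|x1,x2)` (both receivers
must reconstruct both sources), source-channel rate `b = 1` is achievable if there is
a joint distribution `p(q)p(s1,s2,w1,w2)p(x1|q,s1)p(x2|q,s2)p(y1,y2|x1,x2)` such that
for `k = 1, 2`: `H(S1|S2,Wk) < I(X1;Yk|X2,S2,Wk,Q)`, `H(S2|S1,Wk) < I(X2;Yk|X1,S1,Wk,Q)`,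
`H(S1,S2|U,Wk) < I(X1,X2;Yk|U,Wk,Q)` and `H(S1,S2|Wk) < I(X1,X2;Yk|Wk)`, where `U` is
the Gács–Körner common part of `S1` and `S2`. -/
theorem cmac_correlated_sources_rate_one_achievable
    {S1 S2 W1 W2 X1 X2 Y1 Y2 : Type}
    [Fintype S1] [Fintype S2] [Fintype W1] [Fintype W2]
    [Fintype X1] [Fintype X2] [Fintype Y1] [Fintype Y2]
    (pS : S1 × S2 × W1 × W2 → ℝ) (hpS : IsPmf pS)
    (chan : X1 → X2 → Y1 × Y2 → ℝ) (hchan : ∀ x1 x2, IsPmf (chan x1 x2))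
    (h : ∃ (nq nu : ℕ) (pq : Fin nq → ℝ)
      (px1 : Fin nq → S1 → X1 → ℝ) (px2 : Fin nq → S2 → X2 → ℝ)
      (u1 : S1 → Fin nu) (u2 : S2 → Fin nu),
      IsPmf pq ∧ (∀ q s1, IsPmf (px1 q s1)) ∧ (∀ q s2, IsPmf (px2 q s2)) ∧
      IsGKCommonPart pS (fun s => s.1) (fun s => s.2.1) u1 u2 ∧
      -- receiver 1
      (condEnt pS (fun s => s.1) (fun s => (s.2.1, s.2.2.1)) <
        condMutInf (cmacJointMeasure nq pq pS px1 px2 chan)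
          (fun z => z.2.2.1) (fun z => z.2.2.2.2.1)
          (fun z => (z.2.2.2.1, z.2.1.2.1, z.2.1.2.2.1, z.1))) ∧
      (condEnt pS (fun s => s.2.1) (fun s => (s.1, s.2.2.1)) <
        condMutInf (cmacJointMeasure nq pq pS px1 px2 chan)
          (fun z => z.2.2.2.1) (fun z => z.2.2.2.2.1)
          (fun z => (z.2.2.1, z.2.1.1, z.2.1.2.2.1, z.1))) ∧
      (condEnt pS (fun s => (s.1, s.2.1)) (fun s => (u1 s.1, s.2.2.1)) <
        condMutInf (cmacJointMeasure nq pq pS px1 px2 chan)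
          (fun z => (z.2.2.1, z.2.2.2.1)) (fun z => z.2.2.2.2.1)
          (fun z => (u1 z.2.1.1, z.2.1.2.2.1, z.1))) ∧
      (condEnt pS (fun s => (s.1, s.2.1)) (fun s => s.2.2.1) <
        condMutInf (cmacJointMeasure nq pq pS px1 px2 chan)
          (fun z => (z.2.2.1, z.2.2.2.1)) (fun z => z.2.2.2.2.1)
          (fun z => z.2.1.2.2.1)) ∧
      -- receiver 2
      (condEnt pS (fun s => s.1) (fun s => (s.2.1, s.2.2.2)) <
        condMutInf (cmacJointMeasure nq pq pS px1 px2 chan)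
          (fun z => z.2.2.1) (fun z => z.2.2.2.2.2)
          (fun z => (z.2.2.2.1, z.2.1.2.1, z.2.1.2.2.2, z.1))) ∧
      (condEnt pS (fun s => s.2.1) (fun s => (s.1, s.2.2.2)) <
        condMutInf (cmacJointMeasure nq pq pS px1 px2 chan)
          (fun z => z.2.2.2.1) (fun z => z.2.2.2.2.2)
          (fun z => (z.2.2.1, z.2.1.1, z.2.1.2.2.2, z.1))) ∧
      (condEnt pS (fun s => (s.1, s.2.1)) (fun s => (u1 s.1, s.2.2.2)) <
        condMutInf (cmacJointMeasure nq pq pS px1 px2 chan)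
          (fun z => (z.2.2.1, z.2.2.2.1)) (fun z => z.2.2.2.2.2)
          (fun z => (u1 z.2.1.1, z.2.1.2.2.2, z.1))) ∧
      (condEnt pS (fun s => (s.1, s.2.1)) (fun s => s.2.2.2) <
        condMutInf (cmacJointMeasure nq pq pS px1 px2 chan)
          (fun z => (z.2.2.1, z.2.2.2.1)) (fun z => z.2.2.2.2.2)
          (fun z => z.2.1.2.2.2))) :
    cmacAchievable pS chan 1 := by
  obtain ⟨nq, nu, pq, px1, px2, u1, u2, hpq, hpx1, hpx2, ⟨hu, -⟩, a1, a2, a3, a4, b1, b2, b3,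
    b4⟩ := h
  obtain ⟨r0, -, -⟩ := Finset.exists_ne_zero_of_sum_ne_zero (hpS.2.trans_ne one_ne_zero)
  have : Nonempty S1 := ⟨r0.1⟩
  have : Nonempty S2 := ⟨r0.2.1⟩
  obtain ⟨E1, v1, t1, l1⟩ := MacSystem.exists_avg_errorProb_receiver_le hpS hchan hpq hpx1 hpx2 hu
    Prod.fst Prod.fst a1 a2 a3 a4
  obtain ⟨E2, v2, t2, l2⟩ := MacSystem.exists_avg_errorProb_receiver_le hpS hchan hpq hpx1 hpx2 hu
    Prod.snd Prod.snd b1 b2 b3 b4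
  intro ε hε
  have t := t1.add t2
  rw [add_zero] at t
  obtain ⟨n, hn, hn0⟩ :=
    ((t.eventually_lt_const hε).and (Filter.eventually_gt_atTop 0)).exists
  set M1 := (MacSystem.receiver hpS hchan hpq hpx1 hpx2 hu Prod.fst Prod.fst).block n
  set M2 := (MacSystem.receiver hpS hchan hpq hpx1 hpx2 hu Prod.snd Prod.snd).block n
  obtain ⟨a, b, c, habc⟩ := exists_le_codeAvg M1.c1 M1.c2 M1.tq_isPmf M1.in1_isPmf M1.in2_isPmf
    fun a b c => M1.errorProb b c (M1.decoder (E1 n) a b c) +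
      M2.errorProb b c (M2.decoder (E2 n) a b c)
  rw [codeAvg_add] at habc
  refine ⟨n, n, hn0, hn0, (one_mul _).symm, b, c, M1.decoder (E1 n) a b c,
    M2.decoder (E2 n) a b c, ?_⟩
  calc _ ≤ _ := MacSystem.cmacErr_le_errorProb_add hpS hchan hpq hpx1 hpx2 hu b c _ _
    _ ≤ _ := habc
    _ ≤ v1 n + v2 n := add_le_add (l1 n) (l2 n)
    _ < ε := hn
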